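/- arXiv:1305.6765 — 7 statements merged into one kernel-verified Lean document; each statement's English description precedes it below -/
import Mathlib

section
/- Let T > 0 and b, c, p, a be real numbers. Suppose y, z, q : [0,T] → ℝ are differentiable and satisfy, for all t ∈ [0,T], the uncorrelated Stein–Stein Hamiltonian system y'(t) = z(t)²(p − 1/2), z'(t) = b·z(t) + c²·q(t), q'(t) = p·z(t)(1 − p) − b·q(t), together with the boundary conditions y(0) = z(0) = 0, y(T) = a and q(T) = 0. Then (1/2)·∫₀ᵀ (p²·z(t)² + c²·q(t)²) dt = p·a. In particular, if a > 0 then p ≥ 0. -/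
/-! The function `z * q + 2 * p * y` has derivative `p ^ 2 * z ^ 2 + c ^ 2 * q ^ 2` along the flow:
the drift terms `± b * z * q` of `(z * q)'` cancel because `z` and `q` are conjugate, and
`2 * p * y'` turns the remaining `p * (1 - p) * z ^ 2` into `p ^ 2 * z ^ 2`. Being a nonnegative
derivative, the integrand is integrable even for discontinuous `b` and `c`. -/

open Set MeasureTheory

theorem integral_eq_sub_of_hasDerivWithinAt_of_nonneg {a b : ℝ} {f f' : ℝ → ℝ} (hab : a ≤ b)
    (hf : ∀ x ∈ Icc a b, HasDerivWithinAt f (f' x) (Icc a b) x)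
    (hf' : ∀ x ∈ Ioo a b, 0 ≤ f' x) :
    ∫ x in a..b, f' x = f b - f a := by
  have hcont : ContinuousOn f (Icc a b) := fun x hx => (hf x hx).continuousWithinAt
  have hderiv : ∀ x ∈ Ioo a b, HasDerivAt f (f' x) x := fun x hx =>
    (hf x (Ioo_subset_Icc_self hx)).hasDerivAt (Icc_mem_nhds hx.1 hx.2)
  have hint : IntervalIntegrable f' volume a b :=
    (intervalIntegrable_iff_integrableOn_Ioc_of_le hab).2
      (intervalIntegral.integrableOn_deriv_of_nonneg hcont hderiv hf')
  exact intervalIntegral.integral_eq_sub_of_hasDerivAt_of_le hab hcont hderiv hint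

/-- `(y, z, q)` solves, on the set `s` of times, the uncorrelated Stein–Stein Hamiltonian system
with constant momentum `p`; this is the flow along which the energy identity is integrated. The
coefficients `b` and `c` may depend on time, and derivatives are taken within `s`, so that they are
one-sided at the ends of an interval. -/
structure IsUncorrelatedSteinSteinSolutionOn (b c : ℝ → ℝ) (p : ℝ) (y z q : ℝ → ℝ)
    (s : Set ℝ) : Prop where
  hasDerivWithinAt_y : ∀ t ∈ s, HasDerivWithinAt y (z t ^ 2 * (p - 1 / 2)) s t
  hasDerivWithinAt_z : ∀ t ∈ s, HasDerivWithinAt z (b t * z t + c t ^ 2 * q t) s t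
  hasDerivWithinAt_q : ∀ t ∈ s, HasDerivWithinAt q (p * z t * (1 - p) - b t * q t) s t

namespace IsUncorrelatedSteinSteinSolutionOn

variable {b c y z q : ℝ → ℝ} {p t₀ t₁ : ℝ}

theorem hasDerivWithinAt_mul_add_const_mul {s : Set ℝ} {t : ℝ}
    (h : IsUncorrelatedSteinSteinSolutionOn b c p y z q s) (ht : t ∈ s) :
    HasDerivWithinAt (fun t => z t * q t + 2 * p * y t)
      (p ^ 2 * z t ^ 2 + c t ^ 2 * q t ^ 2) s t :=
  (((h.hasDerivWithinAt_z t ht).mul (h.hasDerivWithinAt_q t ht)).add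
    ((h.hasDerivWithinAt_y t ht).const_mul (2 * p))).congr_deriv (by ring)

theorem half_integral_sq_add_sq (h : IsUncorrelatedSteinSteinSolutionOn b c p y z q (Icc t₀ t₁))
    (ht : t₀ ≤ t₁) :
    (1 / 2) * ∫ t in t₀..t₁, (p ^ 2 * z t ^ 2 + c t ^ 2 * q t ^ 2) =
      p * (y t₁ - y t₀) + (z t₁ * q t₁ - z t₀ * q t₀) / 2 := by
  rw [integral_eq_sub_of_hasDerivWithinAt_of_nonneg ht
    (fun t => h.hasDerivWithinAt_mul_add_const_mul) (fun t _ => by positivity)]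
  ring

theorem momentum_nonneg (h : IsUncorrelatedSteinSteinSolutionOn b c p y z q (Icc t₀ t₁))
    (ht : t₀ ≤ t₁) (hzq : z t₁ * q t₁ ≤ z t₀ * q t₀) (hy : y t₀ < y t₁) : 0 ≤ p := by
  have henergy : 0 ≤ ∫ t in t₀..t₁, (p ^ 2 * z t ^ 2 + c t ^ 2 * q t ^ 2) :=
    intervalIntegral.integral_nonneg ht fun t _ => by positivity
  have hp : 0 ≤ p * (y t₁ - y t₀) := by linarith [h.half_integral_sq_add_sq ht]
  exact nonneg_of_mul_nonneg_left hp (sub_pos.2 hy)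

end IsUncorrelatedSteinSteinSolutionOn

theorem stein_stein_uncorrelated_energy_identity_general {b c y z q : ℝ → ℝ} {p t₀ t₁ : ℝ}
    (h : IsUncorrelatedSteinSteinSolutionOn b c p y z q (Icc t₀ t₁)) (ht : t₀ ≤ t₁) :
    (1 / 2) * (∫ t in t₀..t₁, (p ^ 2 * z t ^ 2 + c t ^ 2 * q t ^ 2)) =
        p * (y t₁ - y t₀) + (z t₁ * q t₁ - z t₀ * q t₀) / 2
      ∧ (z t₁ * q t₁ ≤ z t₀ * q t₀ → y t₀ < y t₁ → 0 ≤ p) :=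
  ⟨h.half_integral_sq_add_sq ht, h.momentum_nonneg ht⟩

/-- Energy identity for the uncorrelated Stein–Stein Hamiltonian system:
`(1/2)∫₀ᵀ (p²z² + c²q²) dt = p·a`, and consequently `p ≥ 0` whenever `a > 0`. -/
theorem stein_stein_uncorrelated_energy_identity
    (T b c p a : ℝ) (hT : 0 < T) (y z q : ℝ → ℝ)
    (hy : ∀ t ∈ Set.Icc (0 : ℝ) T,
      HasDerivWithinAt y (z t ^ 2 * (p - 1 / 2)) (Set.Icc (0 : ℝ) T) t)
    (hz : ∀ t ∈ Set.Icc (0 : ℝ) T,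
      HasDerivWithinAt z (b * z t + c ^ 2 * q t) (Set.Icc (0 : ℝ) T) t)
    (hq : ∀ t ∈ Set.Icc (0 : ℝ) T,
      HasDerivWithinAt q (p * z t * (1 - p) - b * q t) (Set.Icc (0 : ℝ) T) t)
    (hy0 : y 0 = 0) (hz0 : z 0 = 0) (hyT : y T = a) (hqT : q T = 0) :
    (1 / 2) * (∫ t in (0 : ℝ)..T, (p ^ 2 * z t ^ 2 + c ^ 2 * q t ^ 2)) = p * a
      ∧ (0 < a → 0 ≤ p) := by
  simpa [hy0, hz0, hyT, hqT] using stein_stein_uncorrelated_energy_identity_general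
    (b := fun _ => b) (c := fun _ => c) ⟨hy, hz, hq⟩ hT.le
end

section
/- Let b, c, p, q₀ be real numbers and let χ > 0 satisfy χ² = c²p(p − 1) − b². If y, z, q : ℝ → ℝ are differentiable and satisfy, for all t, y'(t) = z(t)²(p − 1/2), z'(t) = b·z(t) + c²·q(t), q'(t) = p·z(t)(1 − p) − b·q(t), with initial conditions y(0) = z(0) = 0 and q(0) = q₀, then for all t: z(t) = (q₀c²/χ)·sin(χt), q(t) = q₀·(cos(χt) − (b/χ)·sin(χt)), and y(t) = (q₀²c⁴(2p − 1)/(8χ³))·(2χt − sin(2χt)). Conversely, the functions defined by these formulas satisfy the system with these initial conditions. -/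
/-!
The pair `x = (z, q)` solves the linear system `x' = A x` with `A` traceless, so by Cayley–Hamilton
`A² = -(det A) • 1 = -χ² • 1`. Hence `exp (t A) = cos (χ t) • 1 + (sin (χ t) / χ) • A`, which gives
`z` and `q`, and `y` follows by integrating `sin²`.
-/

open Real

section LinearOscillation

variable {E : Type*} [NormedAddCommGroup E] [NormedSpace ℝ E] {A : E →L[ℝ] E} {ω : ℝ}

theorem hasDerivAt_cos_smul_add_sin_smul (hω : ω ≠ 0) (hA : ∀ v, A (A v) = (-ω ^ 2) • v)
    (v : E) (t : ℝ) :
    HasDerivAt (fun s => cos (ω * s) • v + (sin (ω * s) / ω) • A v)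
      (A (cos (ω * t) • v + (sin (ω * t) / ω) • A v)) t := by
  have h_cos : HasDerivAt (fun s => cos (ω * s)) (-sin (ω * t) * ω) t :=
    (hasDerivAt_const_mul ω).cos
  have h_sin : HasDerivAt (fun s => sin (ω * s) / ω) (cos (ω * t)) t := by
    simpa [hω] using (hasDerivAt_const_mul ω).sin.div_const ω
  refine ((h_cos.smul_const v).add (h_sin.smul_const (A v))).congr_deriv ?_
  rw [map_add, map_smul, map_smul, hA, smul_smul, add_comm]
  congr 2
  field_simp

theorem forall_hasDerivAt_apply_iff (hω : ω ≠ 0) (hA : ∀ v, A (A v) = (-ω ^ 2) • v)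
    {x : ℝ → E} :
    (∀ t, HasDerivAt x (A (x t)) t) ↔
      ∀ t, x t = cos (ω * t) • x 0 + (sin (ω * t) / ω) • A (x 0) := by
  have h_sol := hasDerivAt_cos_smul_add_sin_smul hω hA (x 0)
  constructor
  · intro hx
    exact congrFun <| ODE_solution_unique_univ (v := fun _ => A) (s := fun _ => Set.univ) (t₀ := 0)
      (fun _ => A.lipschitz.lipschitzOnWith) (fun t => ⟨hx t, Set.mem_univ _⟩)
      (fun t => ⟨h_sol t, Set.mem_univ _⟩) (by simp)
  · intro hx t
    rw [hx t]
    exact (h_sol t).congr_of_eventuallyEq (.of_forall hx)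

end LinearOscillation

section TracelessSystem

/-- The endomorphism of the plane with traceless matrix `!![a, β; γ, -a]`, as a continuous linear
map so that the planar system `x' = A x` can be treated as a linear differential equation. -/
def tracelessMap (a β γ : ℝ) : ℝ × ℝ →L[ℝ] ℝ × ℝ :=
  let π₁ := ContinuousLinearMap.fst ℝ ℝ ℝ
  let π₂ := ContinuousLinearMap.snd ℝ ℝ ℝ
  (a • π₁ + β • π₂).prod (γ • π₁ - a • π₂)

variable {a β γ ω : ℝ}

theorem tracelessMap_apply (v : ℝ × ℝ) :
    tracelessMap a β γ v = (a * v.1 + β * v.2, γ * v.1 - a * v.2) :=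
  rfl

theorem tracelessMap_tracelessMap_apply (v : ℝ × ℝ) :
    tracelessMap a β γ (tracelessMap a β γ v) = (a ^ 2 + β * γ) • v := by
  ext <;> simp only [tracelessMap_apply, Prod.smul_fst, Prod.smul_snd, smul_eq_mul] <;> ring

theorem forall_hasDerivAt_traceless_system_iff (hω : ω ≠ 0) (hdet : a ^ 2 + β * γ = -ω ^ 2)
    {z q : ℝ → ℝ} :
    (∀ t, HasDerivAt z (a * z t + β * q t) t ∧ HasDerivAt q (γ * z t - a * q t) t) ↔
      ∀ t, z t = cos (ω * t) * z 0 + sin (ω * t) / ω * (a * z 0 + β * q 0) ∧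
        q t = cos (ω * t) * q 0 + sin (ω * t) / ω * (γ * z 0 - a * q 0) := by
  have hA (v : ℝ × ℝ) : tracelessMap a β γ (tracelessMap a β γ v) = (-ω ^ 2) • v := by
    rw [tracelessMap_tracelessMap_apply, hdet]
  have h_pair (t : ℝ) :
      HasDerivAt (fun s => (z s, q s)) (tracelessMap a β γ (z t, q t)) t ↔
        HasDerivAt z (a * z t + β * q t) t ∧ HasDerivAt q (γ * z t - a * q t) t :=
    ⟨fun h => ⟨(ContinuousLinearMap.fst ℝ ℝ ℝ).hasFDerivAt.comp_hasDerivAt t h,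
      (ContinuousLinearMap.snd ℝ ℝ ℝ).hasFDerivAt.comp_hasDerivAt t h⟩, fun h => h.1.prodMk h.2⟩
  rw [← forall_congr' h_pair, forall_hasDerivAt_apply_iff hω hA]
  simp only [tracelessMap_apply, Prod.ext_iff, Prod.fst_add, Prod.snd_add, Prod.smul_fst,
    Prod.smul_snd, smul_eq_mul]

end TracelessSystem

theorem hasDerivAt_two_mul_sub_sin_two_mul (ω t : ℝ) :
    HasDerivAt (fun s => 2 * ω * s - sin (2 * ω * s)) (4 * ω * sin (ω * t) ^ 2) t := by
  have h : HasDerivAt (fun s => 2 * ω * s) (2 * ω) t := hasDerivAt_const_mul (2 * ω)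
  refine (h.sub h.sin).congr_deriv ?_
  rw [mul_assoc 2 ω t, cos_two_mul, cos_sq']
  ring

theorem forall_hasDerivAt_and_eq_iff {F : Type*} [NormedAddCommGroup F] [NormedSpace ℝ F]
    {f g g' : ℝ → F} (hg : ∀ t, HasDerivAt g (g' t) t) (t₀ : ℝ) :
    (∀ t, HasDerivAt f (g' t) t) ∧ f t₀ = g t₀ ↔ ∀ t, f t = g t := by
  constructor
  · rintro ⟨hf, h₀⟩
    refine congrFun <| eq_of_fderiv_eq (𝕜 := ℝ) (fun t => (hf t).differentiableAt)
      (fun t => (hg t).differentiableAt) (fun t => ?_) t₀ h₀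
    rw [(hf t).hasFDerivAt.fderiv, (hg t).hasFDerivAt.fderiv]
  · intro h
    obtain rfl : f = g := funext h
    exact ⟨hg, rfl⟩

section SteinStein

/-- The uncorrelated Stein–Stein Hamiltonian system for a trajectory `(y, z, q)`; the conserved
momentum `p` conjugate to `y` enters as a parameter. -/
structure IsSteinSteinTrajectory (b c p : ℝ) (y z q : ℝ → ℝ) : Prop where
  hasDerivAt_y : ∀ t, HasDerivAt y (z t ^ 2 * (p - 1 / 2)) t
  hasDerivAt_z : ∀ t, HasDerivAt z (b * z t + c ^ 2 * q t) t
  hasDerivAt_q : ∀ t, HasDerivAt q (p * z t * (1 - p) - b * q t) t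

variable {b c p q₀ χ : ℝ} {y z q : ℝ → ℝ}

theorem forall_hasDerivAt_z_q_iff (hχ : χ ≠ 0) (hχ2 : χ ^ 2 = c ^ 2 * p * (p - 1) - b ^ 2)
    (hz₀ : z 0 = 0) (hq₀ : q 0 = q₀) :
    (∀ t, HasDerivAt z (b * z t + c ^ 2 * q t) t ∧
        HasDerivAt q (p * z t * (1 - p) - b * q t) t) ↔
      ∀ t, z t = q₀ * c ^ 2 / χ * sin (χ * t) ∧
        q t = q₀ * (cos (χ * t) - b / χ * sin (χ * t)) := by
  have hdet : b ^ 2 + c ^ 2 * (p * (1 - p)) = -χ ^ 2 := by linear_combination hχ2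
  simp only [mul_right_comm p _ (1 - p), forall_hasDerivAt_traceless_system_iff hχ hdet, hz₀, hq₀]
  refine forall_congr' fun t => and_congr ?_ ?_ <;> ring_nf

theorem forall_hasDerivAt_y_iff (hχ : χ ≠ 0)
    (hz : ∀ t, z t = q₀ * c ^ 2 / χ * sin (χ * t)) :
    ((∀ t, HasDerivAt y (z t ^ 2 * (p - 1 / 2)) t) ∧ y 0 = 0) ↔
      ∀ t, y t = q₀ ^ 2 * c ^ 4 * (2 * p - 1) / (8 * χ ^ 3) * (2 * χ * t - sin (2 * χ * t)) := by
  have h_sol (t : ℝ) : HasDerivAt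
      (fun s => q₀ ^ 2 * c ^ 4 * (2 * p - 1) / (8 * χ ^ 3) * (2 * χ * s - sin (2 * χ * s)))
      (z t ^ 2 * (p - 1 / 2)) t := by
    refine ((hasDerivAt_two_mul_sub_sin_two_mul χ t).const_mul _).congr_deriv ?_
    rw [hz t]
    field_simp
    ring
  simpa using forall_hasDerivAt_and_eq_iff (f := y) h_sol 0

theorem isSteinSteinTrajectory_iff (hχ : χ ≠ 0)
    (hχ2 : χ ^ 2 = c ^ 2 * p * (p - 1) - b ^ 2) :
    (IsSteinSteinTrajectory b c p y z q ∧ y 0 = 0 ∧ z 0 = 0 ∧ q 0 = q₀) ↔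
      ∀ t, z t = q₀ * c ^ 2 / χ * sin (χ * t) ∧
        q t = q₀ * (cos (χ * t) - b / χ * sin (χ * t)) ∧
        y t = q₀ ^ 2 * c ^ 4 * (2 * p - 1) / (8 * χ ^ 3) * (2 * χ * t - sin (2 * χ * t)) := by
  constructor
  · rintro ⟨h, hy₀, hz₀, hq₀⟩ t
    have hzq := (forall_hasDerivAt_z_q_iff hχ hχ2 hz₀ hq₀).1
      fun t => ⟨h.hasDerivAt_z t, h.hasDerivAt_q t⟩
    have hy := (forall_hasDerivAt_y_iff hχ fun t => (hzq t).1).1 ⟨h.hasDerivAt_y, hy₀⟩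
    exact ⟨(hzq t).1, (hzq t).2, hy t⟩
  · intro h
    have hz₀ : z 0 = 0 := by simpa using (h 0).1
    have hq₀ : q 0 = q₀ := by simpa using (h 0).2.1
    have hzq := (forall_hasDerivAt_z_q_iff hχ hχ2 hz₀ hq₀).2 fun t => ⟨(h t).1, (h t).2.1⟩
    obtain ⟨hy, hy₀⟩ := (forall_hasDerivAt_y_iff hχ fun t => (h t).1).2 fun t => (h t).2.2
    exact ⟨⟨hy, fun t => (hzq t).1, fun t => (hzq t).2⟩, hy₀, hz₀, hq₀⟩

end SteinStein

/-- Explicit solution of the uncorrelated Stein–Stein Hamiltonian flow started at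
`(y,z,q)(0) = (0,0,q₀)`, together with the converse statement that the explicit
formulas indeed solve the system. -/
theorem stein_stein_uncorrelated_hamiltonian_flow
    (b c p q₀ χ : ℝ) (hχ : 0 < χ) (hχ2 : χ ^ 2 = c ^ 2 * p * (p - 1) - b ^ 2) :
    ((∀ y z q : ℝ → ℝ,
      (∀ t : ℝ, HasDerivAt y (z t ^ 2 * (p - 1 / 2)) t) →
      (∀ t : ℝ, HasDerivAt z (b * z t + c ^ 2 * q t) t) →
      (∀ t : ℝ, HasDerivAt q (p * z t * (1 - p) - b * q t) t) →
      y 0 = 0 → z 0 = 0 → q 0 = q₀ →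
      ∀ t : ℝ,
        z t = q₀ * c ^ 2 / χ * Real.sin (χ * t) ∧
        q t = q₀ * (Real.cos (χ * t) - b / χ * Real.sin (χ * t)) ∧
        y t = q₀ ^ 2 * c ^ 4 * (2 * p - 1) / (8 * χ ^ 3) * (2 * χ * t - Real.sin (2 * χ * t))))
    ∧
    ((∀ t : ℝ,
      HasDerivAt (fun s : ℝ =>
          q₀ ^ 2 * c ^ 4 * (2 * p - 1) / (8 * χ ^ 3) * (2 * χ * s - Real.sin (2 * χ * s)))
        ((q₀ * c ^ 2 / χ * Real.sin (χ * t)) ^ 2 * (p - 1 / 2)) t ∧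
      HasDerivAt (fun s : ℝ => q₀ * c ^ 2 / χ * Real.sin (χ * s))
        (b * (q₀ * c ^ 2 / χ * Real.sin (χ * t))
          + c ^ 2 * (q₀ * (Real.cos (χ * t) - b / χ * Real.sin (χ * t)))) t ∧
      HasDerivAt (fun s : ℝ => q₀ * (Real.cos (χ * s) - b / χ * Real.sin (χ * s)))
        (p * (q₀ * c ^ 2 / χ * Real.sin (χ * t)) * (1 - p)
          - b * (q₀ * (Real.cos (χ * t) - b / χ * Real.sin (χ * t)))) t)
    ∧ q₀ ^ 2 * c ^ 4 * (2 * p - 1) / (8 * χ ^ 3) * (2 * χ * 0 - Real.sin (2 * χ * 0)) = 0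
    ∧ q₀ * c ^ 2 / χ * Real.sin (χ * 0) = 0
    ∧ q₀ * (Real.cos (χ * 0) - b / χ * Real.sin (χ * 0)) = q₀) := by
  constructor
  · intro y z q hy hz hq hy₀ hz₀ hq₀
    exact (isSteinSteinTrajectory_iff hχ.ne' hχ2).1 ⟨⟨hy, hz, hq⟩, hy₀, hz₀, hq₀⟩
  · obtain ⟨h, h₀⟩ := (isSteinSteinTrajectory_iff hχ.ne' hχ2).2 fun _ => ⟨rfl, rfl, rfl⟩
    exact ⟨fun t => ⟨h.hasDerivAt_y t, h.hasDerivAt_z t, h.hasDerivAt_q t⟩, h₀⟩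
end

section
/- Let T > 0, b ≤ 0, c > 0, a > 0 and p, q₀ ∈ ℝ. Differentiable functions y, z, q : [0,T] → ℝ satisfy the uncorrelated Stein–Stein Hamiltonian system y' = z²(p − 1/2), z' = bz + c²q, q' = pz(1 − p) − bq with boundary conditions y(0) = z(0) = 0, q(0) = q₀, y(T) = a and q(T) = 0 if and only if there exists r > 0 with r·cos r − bT·sin r = 0 such that p = (1/2)·(1 + √(1 + 4b²/c² + 4r²/(c²T²))), q₀² = 8r³a / (c⁴(2p − 1)T³(2r − sin(2r))), and, setting χ = r/T, the functions are given by the explicit flow formulas z(t) = (q₀c²/χ)·sin(χt), q(t) = q₀·(cos(χt) − (b/χ)·sin(χt)), y(t) = (q₀²c⁴(2p − 1)/(8χ³))·(2χt − sin(2χt)). -/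
/-!
The pair `(z, u)` with `u = z' = b z + c² q` obeys the oscillator `z' = u`, `u' = -k z`, where
`k = c² p (p - 1) - b²`, and `z 0 = 0`, `q T = 0` become the Dirichlet–Robin conditions `z 0 = 0`,
`z' T = b z T`. Since `y T ≠ 0`, the function `z` is not identically zero, and an energy estimate
then forces `k > 0` as soon as `b T < 1`. Writing `k = (r / T)²`, uniqueness for linear systems
identifies the solution with the trigonometric flow. The condition `q T = 0` becomes the equation
for `r`, the definition of `k` becomes a quadratic equation for `p` whose larger root is selected by
`y T > 0`, and `y T = a` gives `q₀²`.
-/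

open Set Real

section IntegralCurve

variable {E : Type*} [NormedAddCommGroup E] [NormedSpace ℝ E]

theorem eqOn_Icc_of_isIntegralCurveOn {v : ℝ → E → E} {K : NNReal} {f g : ℝ → E} {a b : ℝ}
    (hv : ∀ t, LipschitzWith K (v t)) (hf : IsIntegralCurveOn f v (Icc a b))
    (hg : IsIntegralCurveOn g v (Icc a b)) (hfg : f a = g a) : EqOn f g (Icc a b) := by
  have right_deriv {h : ℝ → E} (hh : IsIntegralCurveOn h v (Icc a b)) :
      ∀ t ∈ Ico a b, HasDerivWithinAt h (v t (h t)) (Ici t) t := fun t ht ↦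
    (hh t (Ico_subset_Icc_self ht)).mono_of_mem_nhdsWithin (Icc_mem_nhdsGE_of_mem ht)
  exact ODE_solution_unique hv hf.continuousOn (right_deriv hf) hg.continuousOn (right_deriv hg) hfg

theorem eqOn_Icc_of_hasDerivWithinAt {f g f' : ℝ → E} {a b : ℝ}
    (hf : ∀ t ∈ Icc a b, HasDerivWithinAt f (f' t) (Icc a b) t)
    (hg : ∀ t ∈ Icc a b, HasDerivWithinAt g (f' t) (Icc a b) t) (hfg : f a = g a) :
    EqOn f g (Icc a b) :=
  eqOn_Icc_of_isIntegralCurveOn (v := fun t _ ↦ f' t) (fun t ↦ LipschitzWith.const (f' t)) hf hg hfg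

end IntegralCurve

section Oscillator

variable {k : ℝ} {z u : ℝ → ℝ}

/-- The primitive of the energy density `(u - m)² - k z²`, shifted by a slope `m`, along solutions
of the oscillator `z' = u`, `u' = -k z`; it vanishes at `0` when `z` does. -/
def shiftedEnergy (z u : ℝ → ℝ) (m t : ℝ) : ℝ :=
  z t * u t - 2 * m * z t + m ^ 2 * t

theorem hasDerivWithinAt_shiftedEnergy {s : Set ℝ} {t : ℝ}
    (hz : HasDerivWithinAt z (u t) s t) (hu : HasDerivWithinAt u (-k * z t) s t) (m : ℝ) :
    HasDerivWithinAt (shiftedEnergy z u m) ((u t - m) ^ 2 - k * z t ^ 2) s t := by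
  refine (((hz.mul hu).sub (hz.const_mul (2 * m))).add
    ((hasDerivWithinAt_id t s).const_mul (m ^ 2))).congr_deriv ?_
  ring

theorem monotoneOn_shiftedEnergy {s : Set ℝ} (hs : Convex ℝ s) (hk : k ≤ 0)
    (hz : ∀ t ∈ s, HasDerivWithinAt z (u t) s t)
    (hu : ∀ t ∈ s, HasDerivWithinAt u (-k * z t) s t) (m : ℝ) :
    MonotoneOn (shiftedEnergy z u m) s := by
  have hderiv : ∀ t ∈ s,
      HasDerivWithinAt (shiftedEnergy z u m) ((u t - m) ^ 2 - k * z t ^ 2) s t :=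
    fun t ht ↦ hasDerivWithinAt_shiftedEnergy (hz t ht) (hu t ht) m
  exact monotoneOn_of_hasDerivWithinAt_nonneg hs (fun t ht ↦ (hderiv t ht).continuousWithinAt)
    (fun t ht ↦ (hderiv t (interior_subset ht)).mono interior_subset)
    (fun t _ ↦ by nlinarith [sq_nonneg (u t - m), sq_nonneg (z t)])

theorem dirichlet_robin_eigenvalue_pos {T b : ℝ} (hT : 0 < T) (hbT : b * T < 1)
    (hz : ∀ t ∈ Icc 0 T, HasDerivWithinAt z (u t) (Icc 0 T) t)
    (hu : ∀ t ∈ Icc 0 T, HasDerivWithinAt u (-k * z t) (Icc 0 T) t)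
    (hz0 : z 0 = 0) (huT : u T = b * z T) (hne : ¬ EqOn z 0 (Icc 0 T)) : 0 < k := by
  by_contra! hk
  have h0 : (0 : ℝ) ∈ Icc 0 T := left_mem_Icc.2 hT.le
  have hTT : T ∈ Icc 0 T := right_mem_Icc.2 hT.le
  have hmono := monotoneOn_shiftedEnergy (convex_Icc 0 T) hk hz hu
  -- The slope `z T / T` minimises `m ↦ ∫ (u - m)²` over `[0, T]`.
  have hzT : z T = 0 := by
    have henergy : 0 ≤ z T ^ 2 * ((b * T - 1) / T) :=
      calc 0 = shiftedEnergy z u (z T / T) 0 := by simp [shiftedEnergy, hz0]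
        _ ≤ shiftedEnergy z u (z T / T) T := hmono _ h0 hTT hT.le
        _ = z T ^ 2 * ((b * T - 1) / T) := by
          rw [shiftedEnergy, huT]
          field_simp
          ring
    have hneg : (b * T - 1) / T < 0 := div_neg_of_neg_of_pos (sub_neg.2 hbT) hT
    exact (sq_nonpos_iff _).1 (nonpos_of_mul_nonneg_left henergy hneg)
  have henergy_zero : EqOn (shiftedEnergy z u 0) 0 (Icc 0 T) := fun t ht ↦
    le_antisymm ((hmono 0 ht hTT ht.2).trans_eq (by simp [shiftedEnergy, hzT]))
      ((hmono 0 h0 ht ht.1).trans_eq' (by simp [shiftedEnergy, hz0]))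
  have hu_zero : ∀ t ∈ Icc 0 T, u t = 0 := fun t ht ↦ by
    have hderiv : (u t - 0) ^ 2 - k * z t ^ 2 = 0 :=
      (uniqueDiffOn_Icc hT t ht).eq_deriv _
        (hasDerivWithinAt_shiftedEnergy (hz t ht) (hu t ht) 0)
        ((hasDerivWithinAt_const t _ 0).congr_of_mem henergy_zero ht)
    nlinarith [sq_nonneg (u t), sq_nonneg (z t)]
  exact hne <| eqOn_Icc_of_hasDerivWithinAt hz
    (fun t ht ↦ by simpa only [hu_zero t ht] using! hasDerivWithinAt_const t _ 0) hz0

end Oscillator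

namespace SteinStein

/-- The uncorrelated Stein–Stein Hamiltonian system on `[0, T]`, with constant momentum `p`, for
the log-price `y`, the volatility `z` and its conjugate momentum `q`; derivatives at the endpoints
are one-sided. -/
def IsSolution (T b c p : ℝ) (y z q : ℝ → ℝ) : Prop :=
  (∀ t ∈ Icc 0 T, HasDerivWithinAt y (z t ^ 2 * (p - 1 / 2)) (Icc 0 T) t) ∧
  (∀ t ∈ Icc 0 T, HasDerivWithinAt z (b * z t + c ^ 2 * q t) (Icc 0 T) t) ∧
  (∀ t ∈ Icc 0 T, HasDerivWithinAt q (p * z t * (1 - p) - b * q t) (Icc 0 T) t)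

/-- The volatility component of the flow of frequency `χ` from `(y, z, q) = (0, 0, q₀)`. -/
noncomputable def flowZ (c χ q₀ t : ℝ) : ℝ :=
  q₀ * c ^ 2 / χ * sin (χ * t)

/-- The conjugate momentum component of the flow of frequency `χ` from `(y, z, q) = (0, 0, q₀)`. -/
noncomputable def flowQ (b χ q₀ t : ℝ) : ℝ :=
  q₀ * (cos (χ * t) - b / χ * sin (χ * t))

/-- The log-price component of the flow of frequency `χ` from `(y, z, q) = (0, 0, q₀)`. -/
noncomputable def flowY (c p χ q₀ t : ℝ) : ℝ :=
  q₀ ^ 2 * c ^ 4 * (2 * p - 1) / (8 * χ ^ 3) * (2 * χ * t - sin (2 * χ * t))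

variable {T b c p χ q₀ r a t : ℝ} {y z q y₁ z₁ q₁ : ℝ → ℝ}

@[simp] lemma flowZ_zero : flowZ c χ q₀ 0 = 0 := by simp [flowZ]

@[simp] lemma flowQ_zero : flowQ b χ q₀ 0 = q₀ := by simp [flowQ]

@[simp] lemma flowY_zero : flowY c p χ q₀ 0 = 0 := by simp [flowY]

lemma hasDerivAt_flowZ (hχ : χ ≠ 0) :
    HasDerivAt (flowZ c χ q₀) (b * flowZ c χ q₀ t + c ^ 2 * flowQ b χ q₀ t) t := by
  refine (((hasDerivAt_const_mul χ).sin).const_mul (q₀ * c ^ 2 / χ)).congr_deriv ?_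
  simp only [flowZ, flowQ]
  field_simp
  ring

lemma hasDerivAt_flowQ (hχ : χ ≠ 0) (hp : χ ^ 2 + b ^ 2 = c ^ 2 * p * (p - 1)) :
    HasDerivAt (flowQ b χ q₀) (p * flowZ c χ q₀ t * (1 - p) - b * flowQ b χ q₀ t) t := by
  have hlin : HasDerivAt (fun τ ↦ χ * τ) χ t := hasDerivAt_const_mul χ
  refine ((hlin.cos.sub (hlin.sin.const_mul (b / χ))).const_mul q₀).congr_deriv ?_
  simp only [flowZ, flowQ]
  field_simp
  linear_combination (-q₀ * sin (χ * t)) * hp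

lemma hasDerivAt_flowY (hχ : χ ≠ 0) :
    HasDerivAt (flowY c p χ q₀) (flowZ c χ q₀ t ^ 2 * (p - 1 / 2)) t := by
  have hlin : HasDerivAt (fun τ ↦ 2 * χ * τ) (2 * χ) t := hasDerivAt_const_mul (2 * χ)
  have hcos : cos (2 * χ * t) = 1 - 2 * sin (χ * t) ^ 2 := by
    rw [mul_assoc, cos_two_mul, cos_sq']
    ring
  refine ((hlin.sub hlin.sin).const_mul _).congr_deriv ?_
  rw [hcos]
  simp only [flowZ]
  field_simp
  ring

theorem isSolution_flow (hχ : χ ≠ 0) (hp : χ ^ 2 + b ^ 2 = c ^ 2 * p * (p - 1)) :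
    IsSolution T b c p (flowY c p χ q₀) (flowZ c χ q₀) (flowQ b χ q₀) :=
  ⟨fun _ _ ↦ (hasDerivAt_flowY hχ).hasDerivWithinAt,
    fun _ _ ↦ (hasDerivAt_flowZ hχ).hasDerivWithinAt,
    fun _ _ ↦ (hasDerivAt_flowQ hχ hp).hasDerivWithinAt⟩

theorem IsSolution.congr (h : IsSolution T b c p y z q) (hy : EqOn y₁ y (Icc 0 T))
    (hz : EqOn z₁ z (Icc 0 T)) (hq : EqOn q₁ q (Icc 0 T)) : IsSolution T b c p y₁ z₁ q₁ := by
  refine ⟨fun t ht ↦ ?_, fun t ht ↦ ?_, fun t ht ↦ ?_⟩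
  · simpa only [hz ht] using (h.1 t ht).congr_of_mem hy ht
  · simpa only [hz ht, hq ht] using (h.2.1 t ht).congr_of_mem hz ht
  · simpa only [hz ht, hq ht] using (h.2.2 t ht).congr_of_mem hq ht

/-- The equations for `(z, q)` form a closed linear system, and then `y` is a quadrature. -/
theorem IsSolution.eqOn_of_initial_eq (h : IsSolution T b c p y z q)
    (h₁ : IsSolution T b c p y₁ z₁ q₁) (hy0 : y 0 = y₁ 0) (hz0 : z 0 = z₁ 0) (hq0 : q 0 = q₁ 0) :
    EqOn y y₁ (Icc 0 T) ∧ EqOn z z₁ (Icc 0 T) ∧ EqOn q q₁ (Icc 0 T) := by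
  let A : ℝ × ℝ →L[ℝ] ℝ × ℝ :=
    (b • ContinuousLinearMap.fst ℝ ℝ ℝ + c ^ 2 • ContinuousLinearMap.snd ℝ ℝ ℝ).prod
      ((p * (1 - p)) • ContinuousLinearMap.fst ℝ ℝ ℝ - b • ContinuousLinearMap.snd ℝ ℝ ℝ)
  have integral_curve {y z q : ℝ → ℝ} (h : IsSolution T b c p y z q) :
      IsIntegralCurveOn (fun t ↦ (z t, q t)) (fun _ ↦ A) (Icc 0 T) := fun t ht ↦
    ((h.2.1 t ht).prodMk (h.2.2 t ht)).congr_deriv (by simp [A, mul_right_comm])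
  have hzq : EqOn (fun t ↦ (z t, q t)) (fun t ↦ (z₁ t, q₁ t)) (Icc 0 T) :=
    eqOn_Icc_of_isIntegralCurveOn (fun _ ↦ A.lipschitz) (integral_curve h) (integral_curve h₁)
      (Prod.ext hz0 hq0)
  have hz : EqOn z z₁ (Icc 0 T) := fun t ht ↦ congrArg Prod.fst (hzq ht)
  have hq : EqOn q q₁ (Icc 0 T) := fun t ht ↦ congrArg Prod.snd (hzq ht)
  exact ⟨eqOn_Icc_of_hasDerivWithinAt h.1 (fun t ht ↦ by simpa only [hz ht] using h₁.1 t ht) hy0,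
    hz, hq⟩

theorem isSolution_and_initial_iff_eq_flow (hT : 0 ≤ T) (hχ : χ ≠ 0)
    (hp : χ ^ 2 + b ^ 2 = c ^ 2 * p * (p - 1)) :
    (IsSolution T b c p y z q ∧ y 0 = 0 ∧ z 0 = 0 ∧ q 0 = q₀) ↔
      ∀ t ∈ Icc 0 T, z t = flowZ c χ q₀ t ∧ q t = flowQ b χ q₀ t ∧ y t = flowY c p χ q₀ t := by
  constructor
  · rintro ⟨h, hy0, hz0, hq0⟩
    obtain ⟨hy, hz, hq⟩ := h.eqOn_of_initial_eq (isSolution_flow (q₀ := q₀) hχ hp)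
      (by simp [hy0]) (by simp [hz0]) (by simp [hq0])
    exact fun t ht ↦ ⟨hz ht, hq ht, hy ht⟩
  · intro h
    have h0 := h 0 (left_mem_Icc.2 hT)
    exact ⟨(isSolution_flow hχ hp).congr (fun t ht ↦ (h t ht).2.2) (fun t ht ↦ (h t ht).1)
      (fun t ht ↦ (h t ht).2.1), by simp [h0], by simp [h0], by simp [h0]⟩

theorem IsSolution.not_eqOn_zero (h : IsSolution T b c p y z q) (hT : 0 ≤ T) (hy : y T ≠ y 0) :
    ¬ EqOn z 0 (Icc 0 T) := fun hz ↦
  hy <| eqOn_Icc_of_hasDerivWithinAt (g := fun _ ↦ y 0) h.1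
    (fun t ht ↦ by simpa [hz ht] using hasDerivWithinAt_const t (Icc 0 T) (y 0))
    rfl (right_mem_Icc.2 hT)

theorem IsSolution.frequency_sq_pos (h : IsSolution T b c p y z q) (hT : 0 < T) (hbT : b * T < 1)
    (hy : y T ≠ y 0) (hz0 : z 0 = 0) (hqT : q T = 0) : 0 < c ^ 2 * p * (p - 1) - b ^ 2 := by
  refine dirichlet_robin_eigenvalue_pos (z := z) (u := fun t ↦ b * z t + c ^ 2 * q t) hT hbT h.2.1
    (fun t ht ↦ ?_) hz0 (by simp [hqT]) (h.not_eqOn_zero hT.le hy)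
  refine (((h.2.1 t ht).const_mul b).add ((h.2.2 t ht).const_mul (c ^ 2))).congr_deriv ?_
  ring

theorem flowQ_eq_zero_iff (hT : T ≠ 0) (hr : r ≠ 0) :
    flowQ b (r / T) q₀ T = 0 ↔ q₀ = 0 ∨ r * cos r - b * T * sin r = 0 := by
  have hfactor : flowQ b (r / T) q₀ T = q₀ * ((r * cos r - b * T * sin r) / r) := by
    rw [flowQ, div_mul_cancel₀ r hT]
    field_simp
  rw [hfactor, mul_eq_zero, div_eq_zero_iff, or_iff_left hr]

lemma sub_sin_two_mul_pos (hr : 0 < r) : 0 < 2 * r - sin (2 * r) :=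
  sub_pos.2 (sin_lt (by positivity))

theorem flowY_pos_iff (hc : c ≠ 0) (hχ : 0 < χ) (ht : 0 < t) :
    0 < flowY c p χ q₀ t ↔ q₀ ≠ 0 ∧ 1 / 2 < p := by
  have hsin : 0 < 2 * χ * t - sin (2 * χ * t) := by
    simpa only [mul_assoc] using sub_sin_two_mul_pos (mul_pos hχ ht)
  rw [flowY, mul_pos_iff_of_pos_right hsin, div_pos_iff_of_pos_right (by positivity)]
  rcases eq_or_ne q₀ 0 with rfl | hq₀
  · simp
  · rw [mul_pos_iff_of_pos_left (by positivity), sub_pos, div_lt_iff₀' two_pos]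
    simp [hq₀]

theorem flowY_eq_iff (hT : 0 < T) (hc : c ≠ 0) (hr : 0 < r) (hp : 1 / 2 < p) :
    flowY c p (r / T) q₀ T = a ↔
      q₀ ^ 2 = 8 * r ^ 3 * a / (c ^ 4 * (2 * p - 1) * T ^ 3 * (2 * r - sin (2 * r))) := by
  have hsin := sub_sin_two_mul_pos hr
  have hp' : 0 < 2 * p - 1 := by linarith
  rw [flowY, mul_assoc 2, div_mul_cancel₀ r hT.ne', eq_div_iff (by positivity), div_pow,
    ← mul_left_cancel_iff_of_pos (show 0 < 8 * r ^ 3 by positivity)]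
  field_simp

theorem momentum_eq_iff (hc : c ≠ 0) :
    p = (1 / 2) * (1 + √(1 + 4 * b ^ 2 / c ^ 2 + 4 * r ^ 2 / (c ^ 2 * T ^ 2))) ↔
      1 / 2 < p ∧ (r / T) ^ 2 + b ^ 2 = c ^ 2 * p * (p - 1) := by
  set R := 1 + 4 * b ^ 2 / c ^ 2 + 4 * r ^ 2 / (c ^ 2 * T ^ 2)
  have hR : 0 < R := by positivity
  have hquad : (2 * p - 1) ^ 2 = R ↔ (r / T) ^ 2 + b ^ 2 = c ^ 2 * p * (p - 1) := by
    have hR_eq : c ^ 2 * R = c ^ 2 + 4 * (b ^ 2 + (r / T) ^ 2) := by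
      simp only [R, div_pow]
      field_simp
      ring
    rw [← mul_right_inj' (pow_ne_zero 2 hc), hR_eq]
    constructor <;> intro h <;> linarith
  rw [← hquad]
  constructor
  · intro hp
    have hsqrt : 2 * p - 1 = √R := by linarith
    exact ⟨by linarith [sqrt_pos.2 hR], by rw [hsqrt, sq_sqrt hR.le]⟩
  · rintro ⟨hp, hsq⟩
    rw [← hsq, sqrt_sq (by linarith)]
    ring

end SteinStein

open SteinStein in
theorem stein_stein_uncorrelated_bvp_characterization_general
    {T b c a p q₀ : ℝ} (hT : 0 < T) (hbT : b * T < 1) (hc : c ≠ 0) (ha : 0 < a) {y z q : ℝ → ℝ} :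
    (IsSolution T b c p y z q ∧ y 0 = 0 ∧ z 0 = 0 ∧ q 0 = q₀ ∧ y T = a ∧ q T = 0) ↔
    ∃ r : ℝ, 0 < r ∧ r * cos r - b * T * sin r = 0 ∧
      p = (1 / 2) * (1 + √(1 + 4 * b ^ 2 / c ^ 2 + 4 * r ^ 2 / (c ^ 2 * T ^ 2))) ∧
      q₀ ^ 2 = 8 * r ^ 3 * a / (c ^ 4 * (2 * p - 1) * T ^ 3 * (2 * r - sin (2 * r))) ∧
      ∀ t ∈ Icc 0 T, z t = flowZ c (r / T) q₀ t ∧ q t = flowQ b (r / T) q₀ t ∧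
        y t = flowY c p (r / T) q₀ t := by
  have hTT : T ∈ Icc 0 T := right_mem_Icc.2 hT.le
  constructor
  · rintro ⟨hsol, hy0, hz0, hq0, hyT, hqT⟩
    have hk := hsol.frequency_sq_pos hT hbT (by rw [hyT, hy0]; exact ha.ne') hz0 hqT
    obtain ⟨r, hr, hpr⟩ : ∃ r, 0 < r ∧ (r / T) ^ 2 + b ^ 2 = c ^ 2 * p * (p - 1) :=
      ⟨√(c ^ 2 * p * (p - 1) - b ^ 2) * T, by positivity,
        by rw [mul_div_cancel_right₀ _ hT.ne', sq_sqrt hk.le, sub_add_cancel]⟩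
    have hχ : 0 < r / T := div_pos hr hT
    have hflow := (isSolution_and_initial_iff_eq_flow hT.le hχ.ne' hpr).1 ⟨hsol, hy0, hz0, hq0⟩
    obtain ⟨-, hQ, hY⟩ := hflow T hTT
    rw [hqT, eq_comm, flowQ_eq_zero_iff hT.ne' hr.ne'] at hQ
    rw [hyT, eq_comm] at hY
    obtain ⟨hq₀, hp⟩ := (flowY_pos_iff hc hχ hT).1 (ha.trans_eq hY.symm)
    exact ⟨r, hr, hQ.resolve_left hq₀, (momentum_eq_iff hc).2 ⟨hp, hpr⟩,
      (flowY_eq_iff hT hc hr hp).1 hY, hflow⟩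
  · rintro ⟨r, hr, hroot, hp_eq, hq₀, hflow⟩
    obtain ⟨hp, hpr⟩ := (momentum_eq_iff hc).1 hp_eq
    obtain ⟨hsol, hy0, hz0, hq0⟩ :=
      (isSolution_and_initial_iff_eq_flow hT.le (div_pos hr hT).ne' hpr).2 hflow
    obtain ⟨-, hQ, hY⟩ := hflow T hTT
    exact ⟨hsol, hy0, hz0, hq0, hY.trans ((flowY_eq_iff hT hc hr hp).2 hq₀),
      hQ.trans ((flowQ_eq_zero_iff hT.ne' hr.ne').2 (.inr hroot))⟩

/-- Characterization of all solutions of the uncorrelated Stein–Stein Hamiltonian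
boundary value problem `(y,z)(0) = (0,0)`, `q(0) = q₀`, `y(T) = a`, `q(T) = 0`
in terms of the positive roots of `r·cos r − bT·sin r = 0`. -/
theorem stein_stein_uncorrelated_bvp_characterization
    (T b c a p q₀ : ℝ) (hT : 0 < T) (hb : b ≤ 0) (hc : 0 < c) (ha : 0 < a)
    (y z q : ℝ → ℝ) :
    ((∀ t ∈ Set.Icc (0 : ℝ) T,
        HasDerivWithinAt y (z t ^ 2 * (p - 1 / 2)) (Set.Icc (0 : ℝ) T) t) ∧
      (∀ t ∈ Set.Icc (0 : ℝ) T,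
        HasDerivWithinAt z (b * z t + c ^ 2 * q t) (Set.Icc (0 : ℝ) T) t) ∧
      (∀ t ∈ Set.Icc (0 : ℝ) T,
        HasDerivWithinAt q (p * z t * (1 - p) - b * q t) (Set.Icc (0 : ℝ) T) t) ∧
      y 0 = 0 ∧ z 0 = 0 ∧ q 0 = q₀ ∧ y T = a ∧ q T = 0)
    ↔
    (∃ r : ℝ, 0 < r ∧ r * Real.cos r - b * T * Real.sin r = 0 ∧
      p = (1 / 2) * (1 + Real.sqrt (1 + 4 * b ^ 2 / c ^ 2 + 4 * r ^ 2 / (c ^ 2 * T ^ 2))) ∧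
      q₀ ^ 2 = 8 * r ^ 3 * a / (c ^ 4 * (2 * p - 1) * T ^ 3 * (2 * r - Real.sin (2 * r))) ∧
      (∀ t ∈ Set.Icc (0 : ℝ) T,
        z t = q₀ * c ^ 2 / (r / T) * Real.sin ((r / T) * t) ∧
        q t = q₀ * (Real.cos ((r / T) * t) - b / (r / T) * Real.sin ((r / T) * t)) ∧
        y t = q₀ ^ 2 * c ^ 4 * (2 * p - 1) / (8 * (r / T) ^ 3)
            * (2 * (r / T) * t - Real.sin (2 * (r / T) * t)))) := by
  have hbT : b * T < 1 := (mul_nonpos_of_nonpos_of_nonneg hb hT.le).trans_lt one_pos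
  simpa only [SteinStein.IsSolution, SteinStein.flowZ, SteinStein.flowQ, SteinStein.flowY,
    and_assoc] using stein_stein_uncorrelated_bvp_characterization_general hT hbT hc.ne' ha
end

section
/- Let T > 0 and b, c, p, a, ρ be real numbers, and set b̃ = b + ρcp. Suppose y, z, q : [0,T] → ℝ are differentiable and satisfy, for all t ∈ [0,T], the correlated Stein–Stein Hamiltonian system y' = z²(p − 1/2) + ρczq, z' = b̃z + c²q, q' = pz(1 − p) − b̃q, with y(0) = z(0) = 0, y(T) = a and q(T) = 0. Then (1/2)·∫₀ᵀ (p²·z(t)² + 2ρcp·z(t)·q(t) + c²·q(t)²) dt = p·a. In particular, if a > 0 and |ρ| ≤ 1 then p ≥ 0. -/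
/-!
Let `H` be the Hamiltonian, so that `y' = ∂H/∂p`, `z' = ∂H/∂q` and `q' = -∂H/∂z`. Half the
squared modulus of the control is the Legendre transform `p y' + q z' - H`, and `H` is homogeneous
of degree two in `(z, q)`, so that `2H = z ∂H/∂z + q ∂H/∂q = q z' - z q'` by Euler's identity.
Eliminating `H`, the squared modulus is `2 p y' + q z' + z q'`, the derivative of `2 p y + z q`, and
the boundary conditions `z 0 = q T = 0` kill the contribution of `z q`. For `|ρ| ≤ 1` the squared
modulus is nonnegative, which gives the sign of `p`.
-/

namespace SteinStein

variable {b c ρ p : ℝ}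

/-- The Hamiltonian of the correlated Stein–Stein model, which does not depend on `y`. The
correlation enters through `b + ρ * c * p`, the constant `b̃` of the paper. -/
noncomputable def hamiltonian (b c ρ z p q : ℝ) : ℝ :=
  -(z ^ 2 * p) / 2 + (b + ρ * c * p) * z * q + (z ^ 2 * p ^ 2 + c ^ 2 * q ^ 2) / 2

/-- The squared modulus of the candidate optimal control `(p z √(1 - ρ²), ρ p z + c q)`, expanded
so that it makes sense for every real `ρ`. -/
def controlNormSq (c ρ z p q : ℝ) : ℝ :=
  p ^ 2 * z ^ 2 + 2 * ρ * c * p * z * q + c ^ 2 * q ^ 2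

/-- `(y, z, q)` solves Hamilton's equations of `SteinStein.hamiltonian` on `s`, with constant
momentum `p` conjugate to `y`. Derivatives are taken within `s`, hence one-sided at the endpoints
of an interval. -/
structure IsSolutionOn (b c ρ p : ℝ) (y z q : ℝ → ℝ) (s : Set ℝ) : Prop where
  hasDerivWithinAt_y : ∀ t ∈ s,
    HasDerivWithinAt y (z t ^ 2 * (p - 1 / 2) + ρ * c * z t * q t) s t
  hasDerivWithinAt_z : ∀ t ∈ s,
    HasDerivWithinAt z ((b + ρ * c * p) * z t + c ^ 2 * q t) s t
  hasDerivWithinAt_q : ∀ t ∈ s,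
    HasDerivWithinAt q (p * z t * (1 - p) - (b + ρ * c * p) * q t) s t

theorem legendre_transform_hamiltonian (b c ρ z p q : ℝ) :
    p * (z ^ 2 * (p - 1 / 2) + ρ * c * z * q) + q * ((b + ρ * c * p) * z + c ^ 2 * q) -
      hamiltonian b c ρ z p q = controlNormSq c ρ z p q / 2 := by
  unfold hamiltonian controlNormSq
  ring

theorem euler_identity_hamiltonian (b c ρ z p q : ℝ) :
    q * ((b + ρ * c * p) * z + c ^ 2 * q) - z * (p * z * (1 - p) - (b + ρ * c * p) * q) =
      2 * hamiltonian b c ρ z p q := by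
  unfold hamiltonian
  ring

theorem controlNormSq_eq_add_sq (c ρ z p q : ℝ) :
    controlNormSq c ρ z p q = (1 - ρ ^ 2) * (p * z) ^ 2 + (ρ * p * z + c * q) ^ 2 := by
  unfold controlNormSq
  ring

theorem controlNormSq_nonneg (hρ : |ρ| ≤ 1) (c z p q : ℝ) : 0 ≤ controlNormSq c ρ z p q := by
  have hρ_sq : 0 ≤ 1 - ρ ^ 2 := sub_nonneg.2 ((sq_le_one_iff_abs_le_one ρ).2 hρ)
  rw [controlNormSq_eq_add_sq]
  positivity

namespace IsSolutionOn

variable {y z q : ℝ → ℝ} {s : Set ℝ}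

theorem hasDerivWithinAt_two_mul_add_mul (h : IsSolutionOn b c ρ p y z q s) {t : ℝ} (ht : t ∈ s) :
    HasDerivWithinAt (fun t ↦ 2 * p * y t + z t * q t) (controlNormSq c ρ (z t) p (q t)) s t := by
  have hy := (h.hasDerivWithinAt_y t ht).const_mul (2 * p)
  have hzq := (h.hasDerivWithinAt_z t ht).mul (h.hasDerivWithinAt_q t ht)
  refine (hy.add hzq).congr_deriv ?_
  linear_combination 2 * legendre_transform_hamiltonian b c ρ (z t) p (q t) -
    euler_identity_hamiltonian b c ρ (z t) p (q t)

theorem continuousOn_controlNormSq (h : IsSolutionOn b c ρ p y z q s) :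
    ContinuousOn (fun t ↦ controlNormSq c ρ (z t) p (q t)) s := by
  have hz : ContinuousOn z s := fun t ht ↦ (h.hasDerivWithinAt_z t ht).continuousWithinAt
  have hq : ContinuousOn q s := fun t ht ↦ (h.hasDerivWithinAt_q t ht).continuousWithinAt
  unfold controlNormSq
  fun_prop

theorem integral_controlNormSq {t₀ t₁ : ℝ} (h : IsSolutionOn b c ρ p y z q (Set.uIcc t₀ t₁)) :
    ∫ t in t₀..t₁, controlNormSq c ρ (z t) p (q t) =
      (2 * p * y t₁ + z t₁ * q t₁) - (2 * p * y t₀ + z t₀ * q t₀) :=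
  intervalIntegral.integral_eq_sub_of_hasDeriv_right
    (fun _ ht ↦ (h.hasDerivWithinAt_two_mul_add_mul ht).continuousWithinAt)
    (fun _ ht ↦ ((h.hasDerivWithinAt_two_mul_add_mul (Set.Ioo_subset_Icc_self ht)).hasDerivAt
      (Icc_mem_nhds ht.1 ht.2)).hasDerivWithinAt)
    h.continuousOn_controlNormSq.intervalIntegrable

end IsSolutionOn

end SteinStein

/-- Energy identity for the correlated Stein–Stein Hamiltonian system:
`(1/2)∫₀ᵀ (p²z² + 2ρcp·zq + c²q²) dt = p·a`, and consequently `p ≥ 0`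
whenever `a > 0` and `|ρ| ≤ 1`. -/
theorem stein_stein_correlated_energy_identity
    (T b c p a ρ : ℝ) (hT : 0 < T) (y z q : ℝ → ℝ)
    (hy : ∀ t ∈ Set.Icc (0 : ℝ) T,
      HasDerivWithinAt y (z t ^ 2 * (p - 1 / 2) + ρ * c * z t * q t) (Set.Icc (0 : ℝ) T) t)
    (hz : ∀ t ∈ Set.Icc (0 : ℝ) T,
      HasDerivWithinAt z ((b + ρ * c * p) * z t + c ^ 2 * q t) (Set.Icc (0 : ℝ) T) t)
    (hq : ∀ t ∈ Set.Icc (0 : ℝ) T,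
      HasDerivWithinAt q (p * z t * (1 - p) - (b + ρ * c * p) * q t) (Set.Icc (0 : ℝ) T) t)
    (hy0 : y 0 = 0) (hz0 : z 0 = 0) (hyT : y T = a) (hqT : q T = 0) :
    (1 / 2) * (∫ t in (0 : ℝ)..T,
        (p ^ 2 * z t ^ 2 + 2 * ρ * c * p * z t * q t + c ^ 2 * q t ^ 2)) = p * a
      ∧ (0 < a → |ρ| ≤ 1 → 0 ≤ p) := by
  have hsol : SteinStein.IsSolutionOn b c ρ p y z q (Set.uIcc 0 T) := by
    rw [Set.uIcc_of_le hT.le]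
    exact ⟨hy, hz, hq⟩
  have energy :
      (1 / 2) * ∫ t in (0 : ℝ)..T, SteinStein.controlNormSq c ρ (z t) p (q t) = p * a := by
    rw [hsol.integral_controlNormSq, hy0, hz0, hyT, hqT]
    ring
  refine ⟨energy, fun ha hρ ↦ nonneg_of_mul_nonneg_left ?_ ha⟩
  have energy_nonneg : 0 ≤ ∫ t in (0 : ℝ)..T, SteinStein.controlNormSq c ρ (z t) p (q t) :=
    intervalIntegral.integral_nonneg hT.le fun t _ ↦
      SteinStein.controlNormSq_nonneg hρ c (z t) p (q t)
  rw [← energy]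
  positivity
end

section
/- Let β ≤ 0. Then the equation r·cos r = β·sin r has exactly one solution r₁ in the interval (0, π); moreover r₁ ∈ [π/2, π), r₁ = π/2 if and only if β = 0, and r₁ is the smallest strictly positive solution of the equation r·cos r = β·sin r. -/
/-!
On `(0, π)` the equation `r cos r = β sin r` reads `r cot r = β`. The function `r ↦ r cot r` has
derivative `(sin r cos r - r) / sin² r < 0` there, tends to `1` at `0` and to `-∞` at `π`, so every
`β < 1` is attained exactly once. Since `r cot r` vanishes at `π / 2`, comparing `β` with `0` is
comparing the root with `π / 2`.
-/

open Filter Real Set Topology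

theorem mul_cot_eq_iff {x : ℝ} (hx : sin x ≠ 0) (a b : ℝ) :
    a * cot x = b ↔ a * cos x = b * sin x := by
  rw [cot_eq_cos_div_sin, ← mul_div_assoc, div_eq_iff hx]

theorem hasDerivAt_mul_cot {x : ℝ} (hx : sin x ≠ 0) :
    HasDerivAt (fun y ↦ y * cot y) ((sin x * cos x - x) / sin x ^ 2) x := by
  simp only [cot_eq_cos_div_sin]
  refine ((hasDerivAt_id x).mul ((hasDerivAt_cos x).div (hasDerivAt_sin x) hx)).congr_deriv ?_
  simp only [id_eq, Pi.div_apply]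
  field_simp
  linear_combination -x * sin_sq_add_cos_sq x

theorem continuousOn_mul_cot : ContinuousOn (fun x ↦ x * cot x) (Ioo 0 π) := fun _ hx ↦
  (hasDerivAt_mul_cot (sin_pos_of_mem_Ioo hx).ne').continuousAt.continuousWithinAt

theorem sin_mul_cos_lt {x : ℝ} (hx : 0 < x) : sin x * cos x < x := by
  have h := sin_lt (mul_pos two_pos hx)
  rw [sin_two_mul] at h
  linarith

theorem strictAntiOn_mul_cot : StrictAntiOn (fun x ↦ x * cot x) (Ioo 0 π) := by
  refine strictAntiOn_of_deriv_neg (convex_Ioo 0 π) continuousOn_mul_cot fun x hx ↦ ?_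
  rw [interior_Ioo] at hx
  have hsin := sin_pos_of_mem_Ioo hx
  rw [(hasDerivAt_mul_cot hsin.ne').deriv]
  exact div_neg_of_neg_of_pos (sub_neg.2 (sin_mul_cos_lt hx.1)) (pow_pos hsin 2)

theorem tendsto_mul_cot_nhdsNE_zero : Tendsto (fun x ↦ x * cot x) (𝓝[≠] 0) (𝓝 1) := by
  have hlim : Tendsto (fun x ↦ cos x / sinc x) (𝓝 0) (𝓝 1) := by
    have hcont : ContinuousAt (fun x ↦ cos x / sinc x) 0 :=
      continuous_cos.continuousAt.div continuous_sinc.continuousAt (by simp)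
    simpa only [cos_zero, sinc_zero, div_one] using hcont.tendsto
  refine (hlim.mono_left nhdsWithin_le_nhds).congr' ?_
  filter_upwards [self_mem_nhdsWithin] with x hx
  rw [sinc_of_ne_zero hx, cot_eq_cos_div_sin, div_div_eq_mul_div, mul_comm, mul_div_assoc]

theorem tendsto_mul_cot_nhdsLT_pi : Tendsto (fun x ↦ x * cot x) (𝓝[<] π) atBot := by
  have hnum : Tendsto (fun x ↦ x * cos x) (𝓝[<] π) (𝓝 (-π)) := by
    simpa only [cos_pi, mul_neg_one] using
      ((continuous_id'.fun_mul continuous_cos).tendsto π).mono_left nhdsWithin_le_nhds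
  have hsin : Tendsto sin (𝓝[<] π) (𝓝[>] 0) := by
    refine tendsto_nhdsWithin_iff.2 ⟨?_, ?_⟩
    · simpa only [sin_pi] using (continuous_sin.tendsto π).mono_left nhdsWithin_le_nhds
    · filter_upwards [Ioo_mem_nhdsLT pi_pos] with x hx using sin_pos_of_mem_Ioo hx
  refine (hnum.neg_mul_atTop (neg_lt_zero.2 pi_pos) hsin.inv_tendsto_nhdsGT_zero).congr fun x ↦ ?_
  rw [Pi.inv_apply, cot_eq_cos_div_sin, div_eq_mul_inv, mul_assoc]

theorem surjOn_mul_cot : SurjOn (fun x ↦ x * cot x) (Ioo 0 π) (Iio 1) :=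
  isPreconnected_Ioo.intermediate_value_Iio
    (le_principal_iff.2 (Ioo_mem_nhdsLT pi_pos)) (le_principal_iff.2 (Ioo_mem_nhdsGT pi_pos))
    continuousOn_mul_cot tendsto_mul_cot_nhdsLT_pi
    (tendsto_mul_cot_nhdsNE_zero.mono_left (nhdsGT_le_nhdsNE 0))

theorem transversality_equation_first_root_general (β : ℝ) (hβ : β < 1) :
    ∃ r₁ ∈ Ioo 0 π, r₁ * cos r₁ = β * sin r₁ ∧
      (∀ r ∈ Ioo 0 π, r * cos r = β * sin r → r = r₁) ∧
      (π / 2 ≤ r₁ ↔ β ≤ 0) ∧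
      (r₁ = π / 2 ↔ β = 0) ∧
      (∀ r, 0 < r → r * cos r = β * sin r → r₁ ≤ r) := by
  have root_iff : ∀ r ∈ Ioo 0 π, r * cot r = β ↔ r * cos r = β * sin r := fun r hr ↦
    mul_cot_eq_iff (sin_pos_of_mem_Ioo hr).ne' r β
  obtain ⟨r₁, hr₁, hroot : r₁ * cot r₁ = β⟩ := surjOn_mul_cot hβ
  have unique : ∀ r ∈ Ioo 0 π, r * cos r = β * sin r → r = r₁ := fun r hr h ↦
    strictAntiOn_mul_cot.injOn hr hr₁ (((root_iff r hr).2 h).trans hroot.symm)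
  have pi_div_two_mem : π / 2 ∈ Ioo 0 π := ⟨pi_div_two_pos, half_lt_self pi_pos⟩
  have value_pi_div_two : π / 2 * cot (π / 2) = 0 := by
    rw [cot_eq_cos_div_sin, cos_pi_div_two, zero_div, mul_zero]
  refine ⟨r₁, hr₁, (root_iff r₁ hr₁).1 hroot, unique, ?_, ?_, fun r hr h ↦ ?_⟩
  · simpa only [hroot, value_pi_div_two] using
      (strictAntiOn_mul_cot.le_iff_ge hr₁ pi_div_two_mem).symm
  · simpa only [hroot, value_pi_div_two] using
      (strictAntiOn_mul_cot.injOn.eq_iff hr₁ pi_div_two_mem).symm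
  · rcases lt_or_ge r π with hlt | hge
    · exact (unique r ⟨hr, hlt⟩ h).ge
    · exact hr₁.2.le.trans hge

/-- For `β ≤ 0`, the equation `r·cos r = β·sin r` has a unique solution `r₁` in `(0, π)`;
moreover `r₁ ∈ [π/2, π)`, `r₁ = π/2` iff `β = 0`, and `r₁` is the smallest strictly
positive solution. -/
theorem transversality_equation_first_root (β : ℝ) (hβ : β ≤ 0) :
    ∃ r₁ : ℝ, r₁ ∈ Set.Ioo 0 Real.pi ∧ r₁ * Real.cos r₁ = β * Real.sin r₁ ∧
      (∀ r ∈ Set.Ioo 0 Real.pi, r * Real.cos r = β * Real.sin r → r = r₁) ∧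
      r₁ ∈ Set.Ico (Real.pi / 2) Real.pi ∧
      (r₁ = Real.pi / 2 ↔ β = 0) ∧
      (∀ r : ℝ, 0 < r → r * Real.cos r = β * Real.sin r → r₁ ≤ r) := by
  obtain ⟨r₁, hr₁, hroot, unique, hle, heq, hleast⟩ :=
    transversality_equation_first_root_general β (hβ.trans_lt one_pos)
  exact ⟨r₁, hr₁, hroot, unique, ⟨hle.2 hβ, hr₁.2⟩, heq, hleast⟩
end

section
/- Let T > 0, b ≤ 0, c > 0 and a > 0. Let r₁ be the smallest strictly positive solution of r·cos r = bT·sin r and set p₁⁺ = (1/2)·(1 + √(1 + 4b²/c² + 4r₁²/(c²T²))). Consider all pairs consisting of a continuously differentiable control h = (h¹, h²) : [0,T] → ℝ² with h(0) = 0 and differentiable functions y, z : [0,T] → ℝ satisfying the controlled ODE y'(t) = −z(t)²/2 + z(t)·(h¹)'(t), z'(t) = b·z(t) + c·(h²)'(t), with y(0) = z(0) = 0 and y(T) = a. Then the infimum of the energy (1/2)·∫₀ᵀ (((h¹)'(t))² + ((h²)'(t))²) dt over all such pairs equals p₁⁺·a, and this infimum is attained. -/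
/-!
The proof is a verification argument. Write `ω = r₁ / T` and `p = p₁⁺`, so that
`c² (p² - p) = b² + ω²`, and let
`S(t, y, z) = p y + (ω cot (ω t) - b) z² / (2 c²)`, a solution of the Hamilton–Jacobi equation of
the control problem. Along every controlled path,
`(u² + v²) / 2 - dS/dt = (u - p z)² / 2 + (v - (ω cot (ω t) - b) z / c)² / 2 ≥ 0`.
As `r₁ < π`, the only singularity of `cot (ω t)` on `[0, T]` is at `0`, where `z² = O(t²)` cancels
it, and the equation for `r₁` says exactly that `ω cot (ω T) = b`. So `S` runs from `0` to
`p y(T)`, which bounds the energy from below. Both squares vanish along `z(t) = A sin (ω t)`.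
-/

open MeasureTheory Set
open scoped Real Topology
open Real (cos sin cot)

theorem hasDerivWithinAt_integral_of_continuousOn {E : Type*} [NormedAddCommGroup E]
    [NormedSpace ℝ E] [CompleteSpace E] {f : ℝ → E} {a b t : ℝ} (hf : ContinuousOn f (Icc a b))
    (ht : t ∈ Icc a b) : HasDerivWithinAt (fun x ↦ ∫ s in a..x, f s) (f t) (Icc a b) t := by
  have : Fact (t ∈ Icc a b) := ⟨ht⟩
  have hf_int : IntervalIntegrable f volume a t :=
    (hf.mono (Icc_subset_Icc_right ht.2)).intervalIntegrable_of_Icc ht.1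
  exact intervalIntegral.integral_hasDerivWithinAt_right hf_int
    (hf.stronglyMeasurableAtFilter_nhdsWithin measurableSet_Icc t) (hf t ht)

theorem continuousWithinAt_sq_div_of_hasDerivWithinAt {𝕜 : Type*} [NontriviallyNormedField 𝕜]
    {f g : 𝕜 → 𝕜} {f' g' x : 𝕜} {s : Set 𝕜} (hf : HasDerivWithinAt f f' s x)
    (hg : HasDerivWithinAt g g' s x) (hf' : f' ≠ 0) (hfx : f x = 0) (hgx : g x = 0) :
    ContinuousWithinAt (fun t ↦ g t ^ 2 / f t) s x := by
  have h_slope := (hasDerivWithinAt_iff_tendsto_slope.mp hg).div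
    (hasDerivWithinAt_iff_tendsto_slope.mp hf) hf'
  have hg_zero := (continuousWithinAt_sdiff_self.mpr hg.continuousWithinAt).tendsto
  rw [← continuousWithinAt_sdiff_self, ContinuousWithinAt]
  convert (h_slope.mul hg_zero).congr' ?_ using 2
  · simp [hgx]
  · filter_upwards [self_mem_nhdsWithin] with t ht
    have ht_ne : t - x ≠ 0 := sub_ne_zero.mpr ht.2
    simp only [slope_def_field, Pi.div_apply, hfx, hgx, sub_zero]
    rw [div_div_div_cancel_right₀ ht_ne]
    ring

theorem hasDerivAt_cot {x : ℝ} (hx : sin x ≠ 0) : HasDerivAt cot (-(1 + cot x ^ 2)) x := by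
  rw [show cot = fun t ↦ cos t / sin t from funext Real.cot_eq_cos_div_sin]
  refine ((Real.hasDerivAt_cos x).div (Real.hasDerivAt_sin x) hx).congr_deriv ?_
  field_simp
  ring

theorem hasDerivAt_sin_const_mul (ω t : ℝ) :
    HasDerivAt (fun s ↦ sin (ω * s)) (ω * cos (ω * t)) t := by
  simpa [mul_comm] using ((hasDerivAt_id t).const_mul ω).sin

theorem exists_mem_Ioo_mul_cos_eq_mul_sin {β : ℝ} (hβ : β < 1) :
    ∃ r ∈ Ioo 0 π, r * cos r = β * sin r := by
  set ε := Real.arccos (max β 0)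
  have hε_pos : 0 < ε := Real.arccos_pos.mpr (max_lt hβ one_pos)
  have hε_le : ε ≤ π := Real.arccos_le_pi _
  have hcos : cos ε = max β 0 :=
    Real.cos_arccos (neg_one_lt_zero.le.trans (le_max_right ..)) (max_lt hβ one_pos).le
  have h_left : 0 ≤ ε * cos ε - β * sin ε := by
    rw [hcos, sub_nonneg, mul_comm ε]
    gcongr
    · exact Real.sin_nonneg_of_nonneg_of_le_pi hε_pos.le hε_le
    · exact le_max_left ..
    · exact Real.sin_le hε_pos.le
  have h_right : π * cos π - β * sin π < 0 := by simp [Real.pi_pos]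
  have h_cont : ContinuousOn (fun r ↦ r * cos r - β * sin r) (Icc ε π) := by fun_prop
  obtain ⟨r, hr, hr_root⟩ := intermediate_value_Ico' hε_le h_cont ⟨h_right, h_left⟩
  exact ⟨r, ⟨hε_pos.trans_le hr.1, hr.2⟩, sub_eq_zero.mp hr_root⟩

theorem half_mul_one_add_sqrt_sq_sub_self {x : ℝ} (hx : 0 ≤ x) :
    (1 / 2 * (1 + √x)) ^ 2 - 1 / 2 * (1 + √x) = (x - 1) / 4 := by
  linear_combination Real.sq_sqrt hx / 4

/-- The energy on `[0, T]` of a control whose two components have derivatives `u` and `v`. -/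
noncomputable def controlEnergy (T : ℝ) (u v : ℝ → ℝ) : ℝ :=
  1 / 2 * ∫ t in (0 : ℝ)..T, (u t ^ 2 + v t ^ 2)

/-- The set whose infimum is the energy `Λ(a)`: the energies of the `C¹` controls `(h₁, h₂)`
steering the uncorrelated Stein–Stein system from `(0, 0)` to `y T = a`. The derivatives `h₁d`,
`h₂d` of the control are carried along as data. -/
def steeringEnergies (T b c a : ℝ) : Set ℝ :=
  {E : ℝ | ∃ h₁ h₂ h₁d h₂d y z : ℝ → ℝ,
    ContinuousOn h₁d (Icc 0 T) ∧ ContinuousOn h₂d (Icc 0 T) ∧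
    (∀ t ∈ Icc 0 T, HasDerivWithinAt h₁ (h₁d t) (Icc 0 T) t) ∧
    (∀ t ∈ Icc 0 T, HasDerivWithinAt h₂ (h₂d t) (Icc 0 T) t) ∧
    h₁ 0 = 0 ∧ h₂ 0 = 0 ∧
    (∀ t ∈ Icc 0 T, HasDerivWithinAt y (-(z t ^ 2) / 2 + z t * h₁d t) (Icc 0 T) t) ∧
    (∀ t ∈ Icc 0 T, HasDerivWithinAt z (b * z t + c * h₂d t) (Icc 0 T) t) ∧
    y 0 = 0 ∧ z 0 = 0 ∧ y T = a ∧
    E = controlEnergy T h₁d h₂d}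

/-- The path `(y, z)` solves, on `[0, T]` and from `(0, 0)`, the uncorrelated Stein–Stein system
driven by a control whose components have derivatives `u` and `v`. The control itself, being the
primitive of `(u, v)`, is left out. -/
structure IsControlledPath (T b c : ℝ) (u v y z : ℝ → ℝ) : Prop where
  continuousOn_fst : ContinuousOn u (Icc 0 T)
  continuousOn_snd : ContinuousOn v (Icc 0 T)
  hasDerivWithinAt_price :
    ∀ t ∈ Icc 0 T, HasDerivWithinAt y (-(z t ^ 2) / 2 + z t * u t) (Icc 0 T) t
  hasDerivWithinAt_vol : ∀ t ∈ Icc 0 T, HasDerivWithinAt z (b * z t + c * v t) (Icc 0 T) t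
  price_zero : y 0 = 0
  vol_zero : z 0 = 0

theorem mem_steeringEnergies_iff {T b c a E : ℝ} :
    E ∈ steeringEnergies T b c a ↔
      ∃ u v y z, IsControlledPath T b c u v y z ∧ y T = a ∧ E = controlEnergy T u v := by
  constructor
  · rintro ⟨-, -, u, v, y, z, hu, hv, -, -, -, -, hy, hz, hy0, hz0, hyT, hE⟩
    exact ⟨u, v, y, z, ⟨hu, hv, hy, hz, hy0, hz0⟩, hyT, hE⟩
  · rintro ⟨u, v, y, z, ⟨hu, hv, hy, hz, hy0, hz0⟩, hyT, hE⟩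
    exact ⟨fun t ↦ ∫ s in (0 : ℝ)..t, u s, fun t ↦ ∫ s in (0 : ℝ)..t, v s, u, v, y, z, hu, hv,
      fun _ ↦ hasDerivWithinAt_integral_of_continuousOn hu,
      fun _ ↦ hasDerivWithinAt_integral_of_continuousOn hv,
      intervalIntegral.integral_same, intervalIntegral.integral_same, hy, hz, hy0, hz0, hyT, hE⟩

/-- The solution `S(t, y, z)` of the Hamilton–Jacobi equation of the control problem that serves as
verification function. At `t = 0` the cotangent takes the junk value `0`, which is harmless because
controlled paths have `z 0 = 0`. -/
noncomputable def hamiltonJacobiSol (b c p ω t y z : ℝ) : ℝ :=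
  p * y + (ω * cot (ω * t) - b) / (2 * c ^ 2) * z ^ 2

theorem hasDerivAt_hamiltonJacobiSol {b c p ω t u v : ℝ} {y z : ℝ → ℝ} (hc : c ≠ 0)
    (hp : c ^ 2 * (p ^ 2 - p) = b ^ 2 + ω ^ 2) (hsin : sin (ω * t) ≠ 0)
    (hy : HasDerivAt y (-(z t ^ 2) / 2 + z t * u) t) (hz : HasDerivAt z (b * z t + c * v) t) :
    HasDerivAt (fun s ↦ hamiltonJacobiSol b c p ω s (y s) (z s))
      (1 / 2 * (u ^ 2 + v ^ 2) -
        1 / 2 * ((u - p * z t) ^ 2 + (v - (ω * cot (ω * t) - b) / c * z t) ^ 2)) t := by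
  have hcot : HasDerivAt (fun s ↦ ω * cot (ω * s)) (-(ω ^ 2 * (1 + cot (ω * t) ^ 2))) t := by
    have hω : HasDerivAt (fun s ↦ ω * s) ω t := by simpa using (hasDerivAt_id t).const_mul ω
    refine (((hasDerivAt_cot hsin).comp t hω).const_mul ω).congr_deriv ?_
    ring
  refine ((hy.const_mul p).add
    (((hcot.sub_const b).div_const (2 * c ^ 2)).mul (hz.pow 2))).congr_deriv ?_
  simp only [Pi.pow_apply]
  field_simp
  push_cast
  linear_combination z t ^ 2 * hp

theorem sin_mul_pos_of_mem_Ioc {T ω t : ℝ} (hω : 0 < ω) (hωT : ω * T < π) (ht : t ∈ Ioc 0 T) :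
    0 < sin (ω * t) :=
  Real.sin_pos_of_pos_of_lt_pi (mul_pos hω ht.1)
    ((mul_le_mul_of_nonneg_left ht.2 hω.le).trans_lt hωT)

namespace IsControlledPath

variable {T b c p ω : ℝ} {u v y z : ℝ → ℝ}

theorem continuousOn_price (h : IsControlledPath T b c u v y z) : ContinuousOn y (Icc 0 T) :=
  fun t ht ↦ (h.hasDerivWithinAt_price t ht).continuousWithinAt

theorem continuousOn_vol (h : IsControlledPath T b c u v y z) : ContinuousOn z (Icc 0 T) :=
  fun t ht ↦ (h.hasDerivWithinAt_vol t ht).continuousWithinAt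

theorem continuousOn_energyDensity (h : IsControlledPath T b c u v y z) :
    ContinuousOn (fun t ↦ 1 / 2 * (u t ^ 2 + v t ^ 2)) (Icc 0 T) :=
  ((h.continuousOn_fst.pow 2).add (h.continuousOn_snd.pow 2)).const_mul _

theorem continuousOn_cot_mul_vol_sq (h : IsControlledPath T b c u v y z) (hω : 0 < ω)
    (hωT : ω * T < π) : ContinuousOn (fun t ↦ cot (ω * t) * z t ^ 2) (Icc 0 T) := by
  have h_div : ContinuousOn (fun t ↦ z t ^ 2 / sin (ω * t)) (Icc 0 T) := fun t ht ↦ by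
    rcases ht.1.eq_or_lt with rfl | ht_pos
    · exact continuousWithinAt_sq_div_of_hasDerivWithinAt
        (hasDerivAt_sin_const_mul ω 0).hasDerivWithinAt (h.hasDerivWithinAt_vol 0 ht)
        (by simpa using hω.ne') (by simp) h.vol_zero
    · exact ((h.continuousOn_vol t ht).pow 2).div
        (hasDerivAt_sin_const_mul ω t).continuousAt.continuousWithinAt
        (sin_mul_pos_of_mem_Ioc hω hωT ⟨ht_pos, ht.2⟩).ne'
  have h_cos : ContinuousOn (fun t ↦ cos (ω * t)) (Icc 0 T) := by fun_prop
  refine (h_cos.mul h_div).congr fun t _ ↦ ?_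
  simp only [Pi.mul_apply, Real.cot_eq_cos_div_sin]
  ring

theorem continuousOn_hamiltonJacobiSol (h : IsControlledPath T b c u v y z) (hω : 0 < ω)
    (hωT : ω * T < π) :
    ContinuousOn (fun t ↦ hamiltonJacobiSol b c p ω t (y t) (z t)) (Icc 0 T) := by
  have h_cot := h.continuousOn_cot_mul_vol_sq hω hωT
  refine ((h.continuousOn_price.const_mul p).add
    (((h_cot.const_mul ω).sub ((h.continuousOn_vol.pow 2).const_mul b)).div_const
      (2 * c ^ 2))).congr fun t _ ↦ ?_
  simp only [hamiltonJacobiSol, Pi.add_apply, Pi.sub_apply, Pi.pow_apply]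
  ring

theorem hasDerivAt_hamiltonJacobiSol (h : IsControlledPath T b c u v y z) (hc : c ≠ 0)
    (hp : c ^ 2 * (p ^ 2 - p) = b ^ 2 + ω ^ 2) (hω : 0 < ω) (hωT : ω * T < π) {t : ℝ}
    (ht : t ∈ Ioo 0 T) :
    HasDerivAt (fun s ↦ hamiltonJacobiSol b c p ω s (y s) (z s))
      (1 / 2 * (u t ^ 2 + v t ^ 2) -
        1 / 2 * ((u t - p * z t) ^ 2 + (v t - (ω * cot (ω * t) - b) / c * z t) ^ 2)) t :=
  have h_nhds : Icc 0 T ∈ 𝓝 t := Icc_mem_nhds ht.1 ht.2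
  have ht' : t ∈ Icc 0 T := Ioo_subset_Icc_self ht
  _root_.hasDerivAt_hamiltonJacobiSol hc hp
    (sin_mul_pos_of_mem_Ioc hω hωT (Ioo_subset_Ioc_self ht)).ne'
    ((h.hasDerivWithinAt_price t ht').hasDerivAt h_nhds)
    ((h.hasDerivWithinAt_vol t ht').hasDerivAt h_nhds)

theorem hamiltonJacobiSol_sub (h : IsControlledPath T b c u v y z) (hcot : ω * cot (ω * T) = b) :
    hamiltonJacobiSol b c p ω T (y T) (z T) - hamiltonJacobiSol b c p ω 0 (y 0) (z 0) =
      p * y T := by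
  simp [hamiltonJacobiSol, hcot, h.price_zero, h.vol_zero]

theorem mul_le_controlEnergy (h : IsControlledPath T b c u v y z) (hT : 0 ≤ T) (hc : c ≠ 0)
    (hp : c ^ 2 * (p ^ 2 - p) = b ^ 2 + ω ^ 2) (hω : 0 < ω) (hωT : ω * T < π)
    (hcot : ω * cot (ω * T) = b) : p * y T ≤ controlEnergy T u v := by
  rw [controlEnergy, ← intervalIntegral.integral_const_mul, ← h.hamiltonJacobiSol_sub hcot]
  exact intervalIntegral.sub_le_integral_of_hasDeriv_right_of_le hT
    (h.continuousOn_hamiltonJacobiSol hω hωT)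
    (fun t ht ↦ (h.hasDerivAt_hamiltonJacobiSol hc hp hω hωT ht).hasDerivWithinAt)
    h.continuousOn_energyDensity.integrableOn_Icc (fun t _ ↦ sub_le_self _ (by positivity))

theorem controlEnergy_eq_mul (h : IsControlledPath T b c u v y z) (hT : 0 ≤ T) (hc : c ≠ 0)
    (hp : c ^ 2 * (p ^ 2 - p) = b ^ 2 + ω ^ 2) (hω : 0 < ω) (hωT : ω * T < π)
    (hcot : ω * cot (ω * T) = b) (hu : ∀ t ∈ Ioo 0 T, u t = p * z t)
    (hv : ∀ t ∈ Ioo 0 T, v t = (ω * cot (ω * t) - b) / c * z t) :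
    controlEnergy T u v = p * y T := by
  rw [controlEnergy, ← intervalIntegral.integral_const_mul, ← h.hamiltonJacobiSol_sub hcot]
  refine intervalIntegral.integral_eq_sub_of_hasDerivAt_of_le hT
    (h.continuousOn_hamiltonJacobiSol hω hωT) (fun t ht ↦ ?_)
    (h.continuousOn_energyDensity.intervalIntegrable_of_Icc hT)
  simpa [hu t ht, hv t ht] using h.hasDerivAt_hamiltonJacobiSol hc hp hω hωT ht

end IsControlledPath

theorem isControlledPath_sin {c : ℝ} (T b p ω A : ℝ) (hc : c ≠ 0) :
    IsControlledPath T b c (fun t ↦ p * (A * sin (ω * t)))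
      (fun t ↦ (A * (ω * cos (ω * t)) - b * (A * sin (ω * t))) / c)
      (fun t ↦ ∫ s in (0 : ℝ)..t, (p - 1 / 2) * (A * sin (ω * s)) ^ 2)
      (fun t ↦ A * sin (ω * t)) where
  continuousOn_fst := by fun_prop
  continuousOn_snd := by fun_prop
  hasDerivWithinAt_price t ht := by
    have h_cont : ContinuousOn (fun s ↦ (p - 1 / 2) * (A * sin (ω * s)) ^ 2) (Icc 0 T) := by
      fun_prop
    exact (hasDerivWithinAt_integral_of_continuousOn h_cont ht).congr_deriv (by ring)
  hasDerivWithinAt_vol t _ :=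
    ((hasDerivAt_sin_const_mul ω t).const_mul A).hasDerivWithinAt.congr_deriv (by field_simp; ring)
  price_zero := intervalIntegral.integral_same
  vol_zero := by simp

theorem exists_integral_mul_sin_sq_eq {T a κ ω : ℝ} (hT : 0 < T) (ha : 0 ≤ a) (hκ : 0 < κ)
    (hω : 0 < ω) (hωT : ω * T < π) :
    ∃ A, ∫ t in (0 : ℝ)..T, κ * (A * sin (ω * t)) ^ 2 = a := by
  set I := ∫ t in (0 : ℝ)..T, sin (ω * t) ^ 2
  have hI : 0 < I := intervalIntegral.intervalIntegral_pos_of_pos_on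
    (Continuous.intervalIntegrable (by fun_prop) _ _)
    (fun t ht ↦ pow_pos (sin_mul_pos_of_mem_Ioc hω hωT (Ioo_subset_Ioc_self ht)) 2) hT
  refine ⟨√(a / (κ * I)), ?_⟩
  simp only [mul_pow, intervalIntegral.integral_const_mul]
  rw [Real.sq_sqrt (by positivity)]
  change κ * (a / (κ * I) * I) = a
  field_simp

theorem exists_isControlledPath_controlEnergy_eq {T b c a p ω : ℝ} (hT : 0 < T) (hc : c ≠ 0)
    (ha : 0 ≤ a) (hp_half : 1 / 2 < p) (hp : c ^ 2 * (p ^ 2 - p) = b ^ 2 + ω ^ 2) (hω : 0 < ω)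
    (hωT : ω * T < π) (hcot : ω * cot (ω * T) = b) :
    ∃ u v y z, IsControlledPath T b c u v y z ∧ y T = a ∧ controlEnergy T u v = p * a := by
  obtain ⟨A, hA⟩ := exists_integral_mul_sin_sq_eq hT ha (sub_pos.mpr hp_half) hω hωT
  have h_path := isControlledPath_sin T b p ω A hc
  refine ⟨_, _, _, _, h_path, hA, ?_⟩
  conv_rhs => rw [← hA]
  refine h_path.controlEnergy_eq_mul hT.le hc hp hω hωT hcot (fun _ _ ↦ rfl) fun t ht ↦ ?_
  have hsin := (sin_mul_pos_of_mem_Ioc hω hωT (Ioo_subset_Ioc_self ht)).ne'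
  rw [Real.cot_eq_cos_div_sin]
  field_simp

theorem isLeast_steeringEnergies {T b c a p ω : ℝ} (hT : 0 < T) (hc : c ≠ 0) (ha : 0 ≤ a)
    (hp_half : 1 / 2 < p) (hp : c ^ 2 * (p ^ 2 - p) = b ^ 2 + ω ^ 2) (hω : 0 < ω)
    (hωT : ω * T < π) (hcot : ω * cot (ω * T) = b) :
    IsLeast (steeringEnergies T b c a) (p * a) := by
  refine ⟨?_, fun E hE ↦ ?_⟩
  · obtain ⟨u, v, y, z, h_path, hyT, hE⟩ :=
      exists_isControlledPath_controlEnergy_eq hT hc ha hp_half hp hω hωT hcot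
    exact mem_steeringEnergies_iff.mpr ⟨u, v, y, z, h_path, hyT, hE.symm⟩
  · obtain ⟨u, v, y, z, h_path, rfl, rfl⟩ := mem_steeringEnergies_iff.mp hE
    exact h_path.mul_le_controlEnergy hT.le hc hp hω hωT hcot

theorem stein_stein_uncorrelated_energy_value_general
    (T b c a : ℝ) (hT : 0 < T) (hbT : b * T < 1) (hc : c ≠ 0) (ha : 0 ≤ a)
    (r₁ : ℝ) (hr₁ : 0 < r₁) (hroot : r₁ * cos r₁ = b * T * sin r₁)
    (hmin : ∀ r : ℝ, 0 < r → r * cos r = b * T * sin r → r₁ ≤ r) :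
    IsLeast (steeringEnergies T b c a)
      ((1 / 2) * (1 + √(1 + 4 * b ^ 2 / c ^ 2 + 4 * r₁ ^ 2 / (c ^ 2 * T ^ 2))) * a) := by
  obtain ⟨r, ⟨hr_pos, hr_lt⟩, hr⟩ := exists_mem_Ioo_mul_cos_eq_mul_sin hbT
  have hr₁_lt : r₁ < π := (hmin r hr_pos hr).trans_lt hr_lt
  have hsin : 0 < sin r₁ := Real.sin_pos_of_pos_of_lt_pi hr₁ hr₁_lt
  have hωT : r₁ / T * T = r₁ := div_mul_cancel₀ r₁ hT.ne'
  have hcot : r₁ / T * cot (r₁ / T * T) = b := by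
    rw [hωT, Real.cot_eq_cos_div_sin]
    field_simp
    linear_combination hroot
  set D := 1 + 4 * b ^ 2 / c ^ 2 + 4 * r₁ ^ 2 / (c ^ 2 * T ^ 2) with hD
  have hD_pos : 0 < D := by positivity
  have hp_half : 1 / 2 < 1 / 2 * (1 + √D) := by linarith [Real.sqrt_pos.mpr hD_pos]
  have hp : c ^ 2 * ((1 / 2 * (1 + √D)) ^ 2 - 1 / 2 * (1 + √D)) = b ^ 2 + (r₁ / T) ^ 2 := by
    rw [half_mul_one_add_sqrt_sq_sub_self hD_pos.le, hD]
    field_simp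
    ring
  exact isLeast_steeringEnergies hT hc ha hp_half hp (div_pos hr₁ hT) (hωT.trans_lt hr₁_lt) hcot

/-- The minimal energy `Λ(a)` of controls steering the small-noise uncorrelated
Stein–Stein system from `(0,0)` to `y(T) = a` equals `p₁⁺·a`,
and the infimum is attained (`IsLeast`). -/
theorem stein_stein_uncorrelated_energy_value
    (T b c a : ℝ) (hT : 0 < T) (hb : b ≤ 0) (hc : 0 < c) (ha : 0 < a)
    (r₁ : ℝ) (hr₁ : 0 < r₁)
    (hroot : r₁ * Real.cos r₁ = b * T * Real.sin r₁)
    (hmin : ∀ r : ℝ, 0 < r → r * Real.cos r = b * T * Real.sin r → r₁ ≤ r) :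
    IsLeast
      {E : ℝ | ∃ h₁ h₂ h₁d h₂d y z : ℝ → ℝ,
        ContinuousOn h₁d (Set.Icc (0 : ℝ) T) ∧ ContinuousOn h₂d (Set.Icc (0 : ℝ) T) ∧
        (∀ t ∈ Set.Icc (0 : ℝ) T, HasDerivWithinAt h₁ (h₁d t) (Set.Icc (0 : ℝ) T) t) ∧
        (∀ t ∈ Set.Icc (0 : ℝ) T, HasDerivWithinAt h₂ (h₂d t) (Set.Icc (0 : ℝ) T) t) ∧
        h₁ 0 = 0 ∧ h₂ 0 = 0 ∧
        (∀ t ∈ Set.Icc (0 : ℝ) T,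
          HasDerivWithinAt y (-(z t ^ 2) / 2 + z t * h₁d t) (Set.Icc (0 : ℝ) T) t) ∧
        (∀ t ∈ Set.Icc (0 : ℝ) T,
          HasDerivWithinAt z (b * z t + c * h₂d t) (Set.Icc (0 : ℝ) T) t) ∧
        y 0 = 0 ∧ z 0 = 0 ∧ y T = a ∧
        E = (1 / 2) * ∫ t in (0 : ℝ)..T, (h₁d t ^ 2 + h₂d t ^ 2)}
      ((1 / 2) * (1 + Real.sqrt (1 + 4 * b ^ 2 / c ^ 2 + 4 * r₁ ^ 2 / (c ^ 2 * T ^ 2))) * a) :=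
  stein_stein_uncorrelated_energy_value_general T b c a hT
    ((mul_nonpos_of_nonpos_of_nonneg hb hT.le).trans_lt one_pos) hc.ne' ha.le r₁ hr₁ hroot hmin
end

section
/- Let T > 0, b ≤ 0, c > 0, let σ₀, a₀, q₀ be real numbers, let p > 1, and let χ > 0 satisfy χ² + b² = c²·p(p − 1), χ·cos(χT) = b·sin(χT), and 0 < χT < π. Let Ẑ : [0,T] → ℝ be the solution of Ẑ'(t) = b·Ẑ(t) + a₀ with Ẑ(0) = σ₀, and set z(t) = (q₀c²/χ)·sin(χt). Then p(p − 1)·∫₀ᵀ z(t)·Ẑ(t) dt = q₀·(σ₀ + a₀·tan(χT/2)/χ). -/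
/-!
Integrate by parts against the adjoint equation. The function `u t = b sin (χ t) - χ cos (χ t)`
satisfies `u' + b u = (χ² + b²) sin (χ t)`, so `(u Ẑ)' = (χ² + b²) sin (χ t) Ẑ + a₀ u`, and the
transversality relation is exactly `u T = 0`: the unknown terminal value `Ẑ T` drops out. What
remains is `χ Ẑ 0` and the integral of `u`, which transversality and the half-angle formula turn
into a tangent.
-/

section LinearODE

open MeasureTheory
open scoped Interval

theorem integral_mul_eq_sub_of_adjoint_linear_ode
    {A : Type*} [NormedRing A] [NormedAlgebra ℝ A] [CompleteSpace A]
    {α β : ℝ} {b f w u z : ℝ → A}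
    (hu : ∀ t ∈ [[α, β]], HasDerivWithinAt u (w t - u t * b t) [[α, β]] t)
    (hz : ∀ t ∈ [[α, β]], HasDerivWithinAt z (b t * z t + f t) [[α, β]] t)
    (hb : IntervalIntegrable b volume α β) (hf : IntervalIntegrable f volume α β)
    (hw : IntervalIntegrable w volume α β) :
    ∫ t in α..β, w t * z t = u β * z β - u α * z α - ∫ t in α..β, u t * f t := by
  have hu_cont : ContinuousOn u [[α, β]] := fun t ht => (hu t ht).continuousWithinAt
  have hz_cont : ContinuousOn z [[α, β]] := fun t ht => (hz t ht).continuousWithinAt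
  have product_rule := intervalIntegral.integral_deriv_mul_eq_sub_of_hasDerivWithinAt hu hz
    (hw.sub (hb.continuousOn_mul hu_cont)) ((hb.mul_continuousOn hz_cont).add hf)
  have cancel : ∀ t, (w t - u t * b t) * z t + u t * (b t * z t + f t) =
      w t * z t + u t * f t := fun t => by noncomm_ring
  simp only [cancel] at product_rule
  rw [intervalIntegral.integral_add (hw.mul_continuousOn hz_cont)
    (hf.continuousOn_mul hu_cont)] at product_rule
  exact eq_sub_of_add_eq product_rule

end LinearODE

section SineCostate

open Real
open scoped Interval

/-- The costate of the linear equation `z' = b z + a` for the weight `sin (ω t)`: the solution of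
the adjoint equation `u' = (ω² + b²) sin (ω t) - b u` with `u 0 = -ω`. The factor `ω² + b²` is kept
in the source term so that the formula needs no division. -/
noncomputable def sineCostate (b ω t : ℝ) : ℝ :=
  b * sin (ω * t) - ω * cos (ω * t)

theorem sineCostate_zero (b ω : ℝ) : sineCostate b ω 0 = -ω := by
  simp [sineCostate]

theorem hasDerivAt_sineCostate (b ω t : ℝ) :
    HasDerivAt (sineCostate b ω)
      ((ω ^ 2 + b ^ 2) * sin (ω * t) - sineCostate b ω t * b) t := by
  have h_lin : HasDerivAt (fun s => ω * s) ω t := hasDerivAt_const_mul ω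
  refine ((h_lin.sin.const_mul b).sub (h_lin.cos.const_mul ω)).congr_deriv ?_
  rw [sineCostate]
  ring

theorem mul_integral_sineCostate (b ω α β : ℝ) :
    ω * ∫ t in α..β, sineCostate b ω t =
      b * (cos (ω * α) - cos (ω * β)) - ω * (sin (ω * β) - sin (ω * α)) := by
  calc ω * ∫ t in α..β, sineCostate b ω t
      = ∫ x in (ω * α)..(ω * β), (b * sin x - ω * cos x) :=
        intervalIntegral.mul_integral_comp_mul_left (f := fun x => b * sin x - ω * cos x) ω
    _ = b * (cos (ω * α) - cos (ω * β)) - ω * (sin (ω * β) - sin (ω * α)) := by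
        rw [intervalIntegral.integral_sub
            ((continuous_sin.const_mul b).intervalIntegrable _ _)
            ((continuous_cos.const_mul ω).intervalIntegrable _ _),
          intervalIntegral.integral_const_mul, intervalIntegral.integral_const_mul,
          integral_sin, integral_cos]

theorem integral_sin_mul_of_linear_ode {α β a b : ℝ} (ω : ℝ) {z : ℝ → ℝ}
    (hz : ∀ t ∈ [[α, β]], HasDerivWithinAt z (b * z t + a) [[α, β]] t) :
    (ω ^ 2 + b ^ 2) * ∫ t in α..β, sin (ω * t) * z t =
      sineCostate b ω β * z β - sineCostate b ω α * z α
        - a * ∫ t in α..β, sineCostate b ω t := by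
  have duality := integral_mul_eq_sub_of_adjoint_linear_ode
    (fun t _ => (hasDerivAt_sineCostate b ω t).hasDerivWithinAt) hz
    intervalIntegrable_const intervalIntegrable_const
    (Continuous.intervalIntegrable (by fun_prop) α β)
  rw [intervalIntegral.integral_mul_const, mul_comm _ a] at duality
  simpa only [mul_assoc, intervalIntegral.integral_const_mul] using duality

-- At the zeros of `sin θ` both sides are `0`, because `x / 0 = 0`.
theorem tan_div_two_eq_one_sub_cos_div_sin (θ : ℝ) : tan (θ / 2) = (1 - cos θ) / sin θ := by
  have h_cos : 1 - cos θ = 2 * sin (θ / 2) * sin (θ / 2) := by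
    have h_double := cos_two_mul' (θ / 2)
    rw [mul_div_cancel₀ θ two_ne_zero] at h_double
    linear_combination -h_double - sin_sq_add_cos_sq (θ / 2)
  have h_sin : sin θ = 2 * sin (θ / 2) * cos (θ / 2) := by
    rw [← sin_two_mul, mul_div_cancel₀ θ two_ne_zero]
  rw [h_cos, h_sin, tan_eq_sin_div_cos]
  obtain h_zero | h_ne := eq_or_ne (sin (θ / 2)) 0
  · simp [h_zero]
  · exact (mul_div_mul_left _ _ (mul_ne_zero two_ne_zero h_ne)).symm

theorem sin_ne_zero_of_transversality {b ω θ : ℝ} (hω : ω ≠ 0) (h : ω * cos θ = b * sin θ) :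
    sin θ ≠ 0 := by
  intro h_sin
  have h_cos : cos θ = 0 := by simpa [h_sin, hω] using h
  simpa [h_sin, h_cos] using sin_sq_add_cos_sq θ

theorem mul_tan_div_two_of_transversality {b ω θ : ℝ} (hω : ω ≠ 0)
    (h : ω * cos θ = b * sin θ) :
    ω * tan (θ / 2) = ω * sin θ - b * (1 - cos θ) := by
  have h_sin : sin θ ≠ 0 := sin_ne_zero_of_transversality hω h
  rw [tan_div_two_eq_one_sub_cos_div_sin, ← mul_div_assoc, div_eq_iff h_sin]
  linear_combination (cos θ - 1) * h - ω * sin_sq_add_cos_sq θ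

theorem integral_sin_mul_of_transversality {T a b ω : ℝ} {z : ℝ → ℝ} (hω : ω ≠ 0)
    (hT : ω * cos (ω * T) = b * sin (ω * T))
    (hz : ∀ t ∈ [[0, T]], HasDerivWithinAt z (b * z t + a) [[0, T]] t) :
    (ω ^ 2 + b ^ 2) * ∫ t in 0..T, sin (ω * t) * z t = ω * z 0 + a * tan (ω * T / 2) := by
  have terminal : sineCostate b ω T = 0 := sub_eq_zero.mpr hT.symm
  have total : ∫ t in 0..T, sineCostate b ω t = -tan (ω * T / 2) := by
    refine mul_left_cancel₀ hω ?_
    rw [mul_integral_sineCostate, mul_neg, mul_tan_div_two_of_transversality hω hT, mul_zero,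
      cos_zero, sin_zero]
    ring
  rw [integral_sin_mul_of_linear_ode ω hz, terminal, total, sineCostate_zero]
  ring

end SineCostate

theorem stein_stein_uncorrelated_c2_formula_general
    (T b c σ₀ a₀ q₀ p χ : ℝ) (hχ : χ ≠ 0)
    (hχ2 : χ ^ 2 + b ^ 2 = c ^ 2 * p * (p - 1))
    (htrans : χ * Real.cos (χ * T) = b * Real.sin (χ * T))
    (Z : ℝ → ℝ)
    (hZ : ∀ t ∈ Set.uIcc 0 T, HasDerivWithinAt Z (b * Z t + a₀) (Set.uIcc 0 T) t)
    (hZ0 : Z 0 = σ₀) :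
    p * (p - 1) * ∫ t in (0 : ℝ)..T, (q₀ * c ^ 2 / χ * Real.sin (χ * t) * Z t)
      = q₀ * (σ₀ + a₀ * Real.tan (χ * T / 2) / χ) := by
  calc p * (p - 1) * ∫ t in (0 : ℝ)..T, (q₀ * c ^ 2 / χ * Real.sin (χ * t) * Z t)
      = q₀ / χ * ((χ ^ 2 + b ^ 2) * ∫ t in (0 : ℝ)..T, Real.sin (χ * t) * Z t) := by
        simp only [mul_assoc, intervalIntegral.integral_const_mul]
        rw [hχ2]
        ring
    _ = q₀ / χ * (χ * σ₀ + a₀ * Real.tan (χ * T / 2)) := by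
        rw [integral_sin_mul_of_transversality hχ htrans hZ, hZ0]
    _ = q₀ * (σ₀ + a₀ * Real.tan (χ * T / 2) / χ) := by
        field_simp

/-- Closed form for the second-order constant in the uncorrelated Stein–Stein model:
`p(p−1)·∫₀ᵀ z(t)Ẑ(t) dt = q₀(σ₀ + a₀·tan(χT/2)/χ)` where `z(t) = (q₀c²/χ)sin(χt)`
and `Ẑ' = bẐ + a₀`, `Ẑ(0) = σ₀`. -/
theorem stein_stein_uncorrelated_c2_formula
    (T b c σ₀ a₀ q₀ p χ : ℝ) (hT : 0 < T) (hb : b ≤ 0) (hc : 0 < c)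
    (hp : 1 < p) (hχ : 0 < χ)
    (hχ2 : χ ^ 2 + b ^ 2 = c ^ 2 * p * (p - 1))
    (htrans : χ * Real.cos (χ * T) = b * Real.sin (χ * T))
    (hχT0 : 0 < χ * T) (hχT : χ * T < Real.pi)
    (Z : ℝ → ℝ)
    (hZ : ∀ t ∈ Set.Icc (0 : ℝ) T,
      HasDerivWithinAt Z (b * Z t + a₀) (Set.Icc (0 : ℝ) T) t)
    (hZ0 : Z 0 = σ₀) :
    p * (p - 1) * ∫ t in (0 : ℝ)..T, (q₀ * c ^ 2 / χ * Real.sin (χ * t) * Z t)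
      = q₀ * (σ₀ + a₀ * Real.tan (χ * T / 2) / χ) := by
  rw [← Set.uIcc_of_le hT.le] at hZ
  exact stein_stein_uncorrelated_c2_formula_general T b c σ₀ a₀ q₀ p χ hχ.ne' hχ2 htrans Z hZ hZ0
end
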